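/- arXiv:2212.04904 — 2 statements merged into one kernel-verified Lean document; each statement's English description precedes it below -/
import Mathlib

section
/- Let V be a uniformly bounded irreducible weight module for W_n ⊗ B with finite dimensional weight spaces. Then there exists a cofinite ideal J of B (i.e. dim(B/J) < ∞) such that (W_n ⊗ J)·V = 0. -/
open scoped TensorProduct

noncomputable section

namespace LoopWitt

/-- The standard pairing `(u | m)` between `ℂⁿ` and `ℤⁿ`. -/
def pairC {n : ℕ} (u : Fin n → ℂ) (m : Fin n → ℤ) : ℂ := ∑ i, u i * (m i : ℂ)

/-- The standard pairing on `ℂⁿ`. -/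
def pairCC {n : ℕ} (u lam : Fin n → ℂ) : ℂ := ∑ i, u i * lam i

/-- `ℤⁿ = K ⊕ ℤβ`. -/
def IsDirectSumDecomp {n : ℕ} (K : AddSubgroup (Fin n → ℤ)) (β : Fin n → ℤ) : Prop :=
  (∀ m : Fin n → ℤ, ∃ a ∈ K, ∃ d : ℤ, m = a + d • β) ∧ ∀ d : ℤ, d • β ∈ K → d = 0

/-- `r` lies in the positive part `K + ℕ₊ β` of `ℤⁿ`. -/
def posDeg {n : ℕ} (K : AddSubgroup (Fin n → ℤ)) (β : Fin n → ℤ) (r : Fin n → ℤ) : Prop :=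
  ∃ a ∈ K, ∃ d : ℤ, 1 ≤ d ∧ r = a + d • β

/-- A representation of the loop Witt algebra `Wₙ ⊗ B`, given by operators
`D u r b` (for `D(u,r) ⊗ b`, where `D(u,r) = Σ uᵢ tʳ dᵢ`), bilinear in `u` and `b`,
subject to the Witt bracket relations. -/
structure WittRep (n : ℕ) (B : Type*) [CommRing B] [Algebra ℂ B]
    (V : Type*) [AddCommGroup V] [Module ℂ V] where
  D : (Fin n → ℂ) → (Fin n → ℤ) → B → Module.End ℂ V
  D_add_u : ∀ u u' r b, D (u + u') r b = D u r b + D u' r b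
  D_smul_u : ∀ (c : ℂ) u r b, D (c • u) r b = c • D u r b
  D_add_b : ∀ u r b b', D u r (b + b') = D u r b + D u r b'
  D_smul_b : ∀ (c : ℂ) u r b, D u r (c • b) = c • D u r b
  comm_DD : ∀ u r b v s b',
    ⁅D u r b, D v s b'⁆ = D (pairC u s • v - pairC v r • u) (r + s) (b * b')

namespace WittRep

variable {n : ℕ} {B : Type*} [CommRing B] [Algebra ℂ B]
  {V : Type*} [AddCommGroup V] [Module ℂ V]

/-- The weight space of weight `lam` with respect to the Cartan subalgebra `H = ⊕ ℂ dᵢ`. -/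
def weightSpace (ρ : WittRep n B V) (lam : Fin n → ℂ) : Submodule ℂ V where
  carrier := {x | ∀ u, ρ.D u 0 1 x = pairCC u lam • x}
  add_mem' := by
    intro a b ha hb u
    rw [map_add, ha u, hb u, smul_add]
  zero_mem' := by intro u; simp
  smul_mem' := by
    intro c a ha u
    rw [map_smul, ha u, smul_comm]

/-- A weight module: the sum of the weight spaces is everything. -/
def IsWeightModule (ρ : WittRep n B V) : Prop :=
  (⨆ lam : Fin n → ℂ, ρ.weightSpace lam) = ⊤

/-- Uniformly bounded weight spaces. -/
def UniformlyBounded (ρ : WittRep n B V) : Prop :=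
  ∃ N : ℕ, ∀ lam, Module.rank ℂ ↥(ρ.weightSpace lam) ≤ (N : Cardinal)

/-- A Harish-Chandra module: a weight module with finite dimensional weight spaces. -/
def HarishChandra (ρ : WittRep n B V) : Prop :=
  ρ.IsWeightModule ∧ ∀ lam, FiniteDimensional ℂ ↥(ρ.weightSpace lam)

/-- A submodule invariant under all the operators. -/
def Invariant (ρ : WittRep n B V) (U : Submodule ℂ V) : Prop :=
  ∀ u r b, ∀ x ∈ U, ρ.D u r b x ∈ U

/-- Irreducibility. -/
def IsIrreducible (ρ : WittRep n B V) : Prop :=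
  (∃ x : V, x ≠ 0) ∧ ∀ U : Submodule ℂ V, ρ.Invariant U → U = ⊥ ∨ U = ⊤

/-- A single point evaluation module. -/
def IsSinglePointEval (ρ : WittRep n B V) : Prop :=
  ∃ η : B →ₐ[ℂ] ℂ, ∀ u r b, ρ.D u r b = η b • ρ.D u r 1

/-- Nontriviality of the action. -/
def IsNontrivial (ρ : WittRep n B V) : Prop := ∃ u r b x, ρ.D u r b x ≠ 0

/-- `z` is a highest weight vector generating the module, with respect to the
triangular decomposition determined by `ℤⁿ = K ⊕ ℤβ`. -/
def IsHWVector (ρ : WittRep n B V) (K : AddSubgroup (Fin n → ℤ)) (β : Fin n → ℤ)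
    (z : V) : Prop :=
  z ≠ 0 ∧ (∃ lam, z ∈ ρ.weightSpace lam) ∧
  (∀ u r b, posDeg K β r → ρ.D u r b z = 0) ∧
  ∀ U : Submodule ℂ V, ρ.Invariant U → z ∈ U → U = ⊤

/-- A highest weight module. -/
def IsHighestWeight (ρ : WittRep n B V) : Prop :=
  ∃ (K : AddSubgroup (Fin n → ℤ)) (β : Fin n → ℤ),
    IsDirectSumDecomp K β ∧ ∃ z, ρ.IsHWVector K β z

end WittRep

/-- A representation of the loop extended Witt algebra `𝔏_{S,n}(B) = (Wₙ ⋉ (S ⊗ Aₙ)) ⊗ B`,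
given by operators `D u r b` (for `D(u,r) ⊗ b`) and `E s m b` (for `s ⊗ tᵐ ⊗ b`),
suitably multilinear, subject to the bracket relations of `𝔏_{S,n}(B)`. -/
structure ExtWittRep (n : ℕ) (S : Type*) [AddCommGroup S] [Module ℂ S]
    (B : Type*) [CommRing B] [Algebra ℂ B]
    (V : Type*) [AddCommGroup V] [Module ℂ V] where
  D : (Fin n → ℂ) → (Fin n → ℤ) → B → Module.End ℂ V
  E : S → (Fin n → ℤ) → B → Module.End ℂ V
  D_add_u : ∀ u u' r b, D (u + u') r b = D u r b + D u' r b
  D_smul_u : ∀ (c : ℂ) u r b, D (c • u) r b = c • D u r b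
  D_add_b : ∀ u r b b', D u r (b + b') = D u r b + D u r b'
  D_smul_b : ∀ (c : ℂ) u r b, D u r (c • b) = c • D u r b
  E_add_s : ∀ s s' m b, E (s + s') m b = E s m b + E s' m b
  E_smul_s : ∀ (c : ℂ) s m b, E (c • s) m b = c • E s m b
  E_add_b : ∀ s m b b', E s m (b + b') = E s m b + E s m b'
  E_smul_b : ∀ (c : ℂ) s m b, E s m (c • b) = c • E s m b
  comm_DD : ∀ u r b v s b',
    ⁅D u r b, D v s b'⁆ = D (pairC u s • v - pairC v r • u) (r + s) (b * b')
  comm_DE : ∀ u r b s m b', ⁅D u r b, E s m b'⁆ = pairC u m • E s (m + r) (b * b')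
  comm_EE : ∀ s m b s' m' b', ⁅E s m b, E s' m' b'⁆ = 0

namespace ExtWittRep

variable {n : ℕ} {S : Type*} [AddCommGroup S] [Module ℂ S]
  {B : Type*} [CommRing B] [Algebra ℂ B]
  {V : Type*} [AddCommGroup V] [Module ℂ V]

/-- The weight space of the weight given by `lam` on `H` and the linear functional `c`
on `S ≅ S ⊗ t⁰ (⊗ 1)`, with respect to the Cartan subalgebra `H ⊕ (S ⊗ t⁰) (⊗ 1)`. -/
def weightSpace (ρ : ExtWittRep n S B V) (lam : Fin n → ℂ) (c : S →ₗ[ℂ] ℂ) :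
    Submodule ℂ V where
  carrier := {x | (∀ u, ρ.D u 0 1 x = pairCC u lam • x) ∧ ∀ s, ρ.E s 0 1 x = c s • x}
  add_mem' := by
    intro a b ha hb
    refine ⟨fun u => ?_, fun s => ?_⟩
    · rw [map_add, ha.1 u, hb.1 u, smul_add]
    · rw [map_add, ha.2 s, hb.2 s, smul_add]
  zero_mem' := by exact ⟨fun u => by simp, fun s => by simp⟩
  smul_mem' := by
    intro t a ha
    refine ⟨fun u => ?_, fun s => ?_⟩
    · rw [map_smul, ha.1 u, smul_comm]
    · rw [map_smul, ha.2 s, smul_comm]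

/-- A weight module: the weight spaces span. -/
def IsWeightModule (ρ : ExtWittRep n S B V) : Prop :=
  (⨆ p : (Fin n → ℂ) × (S →ₗ[ℂ] ℂ), ρ.weightSpace p.1 p.2) = ⊤

/-- Uniformly bounded weight spaces. -/
def UniformlyBounded (ρ : ExtWittRep n S B V) : Prop :=
  ∃ N : ℕ, ∀ lam c, Module.rank ℂ ↥(ρ.weightSpace lam c) ≤ (N : Cardinal)

/-- Harish-Chandra: a weight module with finite dimensional weight spaces. -/
def HarishChandra (ρ : ExtWittRep n S B V) : Prop :=
  ρ.IsWeightModule ∧ ∀ lam c, FiniteDimensional ℂ ↥(ρ.weightSpace lam c)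

/-- Invariant submodule. -/
def Invariant (ρ : ExtWittRep n S B V) (U : Submodule ℂ V) : Prop :=
  (∀ u r b, ∀ x ∈ U, ρ.D u r b x ∈ U) ∧ (∀ s m b, ∀ x ∈ U, ρ.E s m b x ∈ U)

/-- Irreducibility. -/
def IsIrreducible (ρ : ExtWittRep n S B V) : Prop :=
  (∃ x : V, x ≠ 0) ∧ ∀ U : Submodule ℂ V, ρ.Invariant U → U = ⊥ ∨ U = ⊤

/-- A single point evaluation module. -/
def IsSinglePointEval (ρ : ExtWittRep n S B V) : Prop :=
  ∃ η : B →ₐ[ℂ] ℂ, (∀ u r b, ρ.D u r b = η b • ρ.D u r 1) ∧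
    ∀ s m b, ρ.E s m b = η b • ρ.E s m 1

/-- Single point generalised evaluation module: the action factors through
`𝔤 ⊗ B/𝔪ᵏ` for some maximal ideal `𝔪` and some `k`. -/
def IsGenEval (ρ : ExtWittRep n S B V) : Prop :=
  ∃ 𝔪 : Ideal B, 𝔪.IsMaximal ∧ ∃ k : ℕ, ∀ b ∈ 𝔪 ^ k,
    (∀ u r, ρ.D u r b = 0) ∧ ∀ s m, ρ.E s m b = 0

/-- Nontriviality of the action. -/
def IsNontrivial (ρ : ExtWittRep n S B V) : Prop :=
  (∃ u r b x, ρ.D u r b x ≠ 0) ∨ ∃ s m b x, ρ.E s m b x ≠ 0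

/-- The submodule of vectors on which the whole Lie algebra acts trivially. -/
def trivVectors (ρ : ExtWittRep n S B V) : Submodule ℂ V where
  carrier := {x | (∀ u r b, ρ.D u r b x = 0) ∧ ∀ s m b, ρ.E s m b x = 0}
  add_mem' := by
    intro a b ha hb
    exact ⟨fun u r c => by rw [map_add, ha.1 u r c, hb.1 u r c, add_zero],
      fun s m c => by rw [map_add, ha.2 s m c, hb.2 s m c, add_zero]⟩
  zero_mem' := ⟨fun u r c => by simp, fun s m c => by simp⟩
  smul_mem' := by
    intro t a ha
    exact ⟨fun u r c => by rw [map_smul, ha.1 u r c, smul_zero],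
      fun s m c => by rw [map_smul, ha.2 s m c, smul_zero]⟩

/-- Highest weight vector for the triangular decomposition determined by `ℤⁿ = K ⊕ ℤβ`,
generating the whole module. -/
def IsHWVector (ρ : ExtWittRep n S B V) (K : AddSubgroup (Fin n → ℤ)) (β : Fin n → ℤ)
    (z : V) : Prop :=
  z ≠ 0 ∧ (∃ lam c, z ∈ ρ.weightSpace lam c) ∧
  (∀ u r b, posDeg K β r → ρ.D u r b z = 0) ∧
  (∀ s m b, posDeg K β m → ρ.E s m b z = 0) ∧
  ∀ U : Submodule ℂ V, ρ.Invariant U → z ∈ U → U = ⊤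

/-- Highest weight module. -/
def IsHighestWeight (ρ : ExtWittRep n S B V) : Prop :=
  ∃ (K : AddSubgroup (Fin n → ℤ)) (β : Fin n → ℤ),
    IsDirectSumDecomp K β ∧ ∃ z, ρ.IsHWVector K β z

/-- Invariance under the degree-`K` part `(𝔏_{S,n}(B))_K`. -/
def InvariantK (ρ : ExtWittRep n S B V) (K : AddSubgroup (Fin n → ℤ))
    (U : Submodule ℂ V) : Prop :=
  (∀ u, ∀ r ∈ K, ∀ b, ∀ x ∈ U, ρ.D u r b x ∈ U) ∧
    ∀ s, ∀ m ∈ K, ∀ b, ∀ x ∈ U, ρ.E s m b x ∈ U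

/-- The highest weight space: the `(𝔏_{S,n}(B))_K`-submodule generated by `z`. -/
def hwSpace (ρ : ExtWittRep n S B V) (K : AddSubgroup (Fin n → ℤ)) (z : V) :
    Submodule ℂ V :=
  sInf {U : Submodule ℂ V | z ∈ U ∧ ρ.InvariantK K U}

end ExtWittRep

end LoopWitt

open LoopWitt

/-!
For `r ≠ 0` the bracket `[D(v,0) ⊗ c, D(u,r) ⊗ b] = (v | r) D(u,r) ⊗ cb` shows that the elements
`b` for which all `D(u,r) ⊗ b` kill the weight space `V_λ` form an ideal `I_r`, which is cofinite
because it is the kernel of a linear map from `B` to `Hom(ℂⁿ, Hom(V_λ, V_{λ+r}))`. The brackets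
`[D(u,r) ⊗ a, D(v,s) ⊗ b]` give `I_r I_s ⊆ I_{r+s}`, so that the product `K` of the finitely many
ideals `I_{±eᵢ}`, `I_{±2eᵢ}` has some power, depending on `r`, inside `I_r`. Uniform boundedness of
the weight spaces makes the exponent independent of `r`: a nilpotent ideal of `B / I_r` vanishes
in the power `dim (B / I_r) ≤ n N²`. Finally, the vectors killed by `Wₙ ⊗ J` form a submodule.
-/

namespace LoopWitt

section CofiniteIdeals

variable {k B : Type*} [CommRing k] [CommRing B] [Algebra k B]

theorem exists_injective_quotient_of_eq_zero_iff_mem {F : Type*} [AddCommGroup F] [Module k F]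
    (φ : B →ₗ[k] F) (I : Ideal B) (hφ : ∀ b, φ b = 0 ↔ b ∈ I) :
    ∃ f : (B ⧸ I) →ₗ[k] F, Function.Injective f := by
  have hker : LinearMap.ker φ = I.restrictScalars k := Submodule.ext hφ
  refine ⟨(Submodule.liftQ (I.restrictScalars k) φ hker.ge).comp
    (Submodule.Quotient.restrictScalarsEquiv k I).symm.toLinearMap, ?_⟩
  rw [LinearMap.coe_comp]
  refine Function.Injective.comp ?_ (LinearEquiv.injective _)
  exact LinearMap.ker_eq_bot.mp (Submodule.ker_liftQ_eq_bot _ _ _ hker.le)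

variable [Algebra.FiniteType k B]

/-- A finitely generated algebra is finite as soon as it is integral, and the product of monic
equations for `b` modulo `I` and modulo `J` is a monic equation for `b` modulo `I * J`. -/
theorem finite_quotient_mul {I J : Ideal B} (hI : Module.Finite k (B ⧸ I))
    (hJ : Module.Finite k (B ⧸ J)) : Module.Finite k (B ⧸ I * J) := by
  have exists_monic_mem {L : Ideal B} (hL : Module.Finite k (B ⧸ L)) (b : B) :
      ∃ p : Polynomial k, p.Monic ∧ Polynomial.aeval b p ∈ L := by
    obtain ⟨p, hp, hpb⟩ := Algebra.IsIntegral.isIntegral (R := k) (Ideal.Quotient.mkₐ k L b)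
    refine ⟨p, hp, Ideal.Quotient.eq_zero_iff_mem.mp ?_⟩
    rwa [← Polynomial.aeval_def, Polynomial.aeval_algHom_apply] at hpb
  have : Algebra.IsIntegral k (B ⧸ I * J) := ⟨fun x => by
    obtain ⟨b, rfl⟩ := Ideal.Quotient.mkₐ_surjective k (I * J) x
    obtain ⟨p, hp, hpb⟩ := exists_monic_mem hI b
    obtain ⟨q, hq, hqb⟩ := exists_monic_mem hJ b
    refine ⟨p * q, hp.mul hq, ?_⟩
    rw [← Polynomial.aeval_def, Polynomial.aeval_algHom_apply, map_mul]
    exact Ideal.Quotient.eq_zero_iff_mem.mpr (Ideal.mul_mem_mul hpb hqb)⟩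
  exact Algebra.IsIntegral.finite

theorem finite_quotient_prod {ι : Type*} {s : Finset ι} {I : ι → Ideal B}
    (hI : ∀ i ∈ s, Module.Finite k (B ⧸ I i)) : Module.Finite k (B ⧸ ∏ i ∈ s, I i) := by
  refine Finset.prod_induction I (fun J => Module.Finite k (B ⧸ J))
    (fun _ _ => finite_quotient_mul) ?_ hI
  rw [Ideal.one_eq_top]
  infer_instance

theorem finite_quotient_pow {I : Ideal B} (hI : Module.Finite k (B ⧸ I)) (m : ℕ) :
    Module.Finite k (B ⧸ I ^ m) := by
  rw [← Fin.prod_const m I]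
  exact finite_quotient_prod fun _ _ => hI

end CofiniteIdeals

section NilpotentIdeals

theorem pow_eq_zero_of_pow_succ_eq {M : Type*} [MonoidWithZero M] {a : M} (ha : IsNilpotent a)
    {j : ℕ} (h : a ^ (j + 1) = a ^ j) : a ^ j = 0 := by
  have hconst (i : ℕ) : a ^ (j + i) = a ^ j := by
    induction i with
    | zero => rfl
    | succ i ih => rw [← add_assoc, pow_succ, ih, ← pow_succ, h]
  obtain ⟨m, hm⟩ := ha
  rw [← hconst m, pow_add, hm, mul_zero]

variable {k B : Type*} [Field k] [CommRing B] [Algebra k B]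

theorem pow_finrank_eq_zero_of_isNilpotent [Module.Finite k B] {K : Ideal B} (hK : IsNilpotent K) :
    K ^ Module.finrank k B = 0 := by
  let dim (j : ℕ) : ℕ := Module.finrank k ((K ^ j).restrictScalars k)
  have hdim (j : ℕ) : K ^ j = 0 ∨ dim j + j ≤ Module.finrank k B := by
    induction j with
    | zero => exact Or.inr (Submodule.finrank_le _)
    | succ j ih =>
      rcases (Ideal.pow_le_pow_right j.le_succ : K ^ (j + 1) ≤ K ^ j).eq_or_lt with heq | hlt
      · exact Or.inl (heq.trans (pow_eq_zero_of_pow_succ_eq hK heq))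
      · have hdrop : dim (j + 1) < dim j := Submodule.finrank_lt_finrank_of_lt hlt
        refine ih.imp (fun h => ?_) fun h => by omega
        rw [pow_succ, h, zero_mul]
  refine (hdim _).elim id fun h => ?_
  have hzero : dim (Module.finrank k B) = 0 := by omega
  exact (Submodule.restrictScalars_eq_bot_iff k B B).mp (Submodule.finrank_eq_zero.mp hzero)

theorem pow_finrank_quotient_le {I K : Ideal B} [Module.Finite k (B ⧸ I)] {m : ℕ}
    (hm : K ^ m ≤ I) : K ^ Module.finrank k (B ⧸ I) ≤ I := by
  have hpow (j : ℕ) : K ^ j ≤ I ↔ K.map (Ideal.Quotient.mk I) ^ j = 0 := by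
    rw [← Ideal.map_pow, Ideal.zero_eq_bot, Ideal.map_eq_bot_iff_le_ker, Ideal.mk_ker]
  exact (hpow _).mpr (pow_finrank_eq_zero_of_isNilpotent ⟨m, (hpow m).mp hm⟩)

end NilpotentIdeals

section Degrees

theorem int_mem_of_pos {S : Set ℤ} (hadd : ∀ a ∈ S, ∀ b ∈ S, a ≠ b → b ≠ 0 → a + b ∈ S)
    (h1 : 1 ∈ S) (h2 : 2 ∈ S) {c : ℤ} (hc : 0 < c) : c ∈ S := by
  obtain rfl | hc : c = 1 ∨ 2 ≤ c := by omega
  · exact h1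
  · induction c, hc using Int.leInduction with
    | base => exact h2
    | succ c hc ih => exact hadd c (ih (by omega)) 1 h1 (by omega) one_ne_zero

theorem int_mem_of_one_two {S : Set ℤ} (hadd : ∀ a ∈ S, ∀ b ∈ S, a ≠ b → b ≠ 0 → a + b ∈ S)
    (hS : ∀ c ∈ ({1, 2, -1, -2} : Finset ℤ), c ∈ S) (c : ℤ) : c ∈ S := by
  rcases lt_trichotomy c 0 with hc | rfl | hc
  · have hneg : ∀ a ∈ -S, ∀ b ∈ -S, a ≠ b → b ≠ 0 → a + b ∈ -S := fun a ha b hb hab hb0 => by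
      rw [Set.mem_neg, neg_add]
      exact hadd _ ha _ hb (neg_injective.ne hab) (neg_ne_zero.mpr hb0)
    simpa using int_mem_of_pos hneg (hS (-1) (by simp)) (hS (-2) (by simp)) (neg_pos.mpr hc)
  · exact hadd 1 (hS 1 (by simp)) (-1) (hS (-1) (by simp)) (by norm_num) (by norm_num)
  · exact int_mem_of_pos hadd (hS 1 (by simp)) (hS 2 (by simp)) hc

theorem mem_of_single_mem {ι : Type*} [Finite ι] [DecidableEq ι] [Nonempty ι] {S : Set (ι → ℤ)}
    (hadd : ∀ r ∈ S, ∀ s ∈ S, r ≠ s → s ≠ 0 → r + s ∈ S)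
    (hS : ∀ i, ∀ c ∈ ({1, 2, -1, -2} : Finset ℤ), Pi.single i c ∈ S) (r : ι → ℤ) : r ∈ S := by
  cases nonempty_fintype ι
  have hsingle (i : ι) (c : ℤ) : Pi.single i c ∈ S := by
    refine int_mem_of_one_two (S := Pi.single (M := fun _ => ℤ) i ⁻¹' S)
      (fun a ha b hb hab hb0 => ?_) (hS i) c
    rw [Set.mem_preimage, Pi.single_add]
    exact hadd _ ha _ hb ((Pi.single_injective i).ne hab) (by simpa using hb0)
  have hpartial (t : Finset ι) : ∑ i ∈ t, Pi.single i (r i) ∈ S := by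
    induction t using Finset.induction_on with
    | empty => simpa using hsingle (Classical.arbitrary ι) 0
    | insert i t hi ih =>
      rw [Finset.sum_insert hi, add_comm]
      by_cases hr : r i = 0
      · simpa [hr] using ih
      · have hcoord : (∑ j ∈ t, Pi.single j (r j) : ι → ℤ) i = 0 := by
          simp [Finset.sum_apply, hi]
        refine hadd _ ih _ (hsingle i (r i)) (fun h => hr ?_) (by simpa using hr)
        rw [← Pi.single_eq_same (M := fun _ => ℤ) i (r i), ← h, hcoord]
  simpa only [Finset.univ_sum_single] using hpartial Finset.univ

end Degrees

section Pairing

variable {n : ℕ}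

theorem pairC_add_left (u v : Fin n → ℂ) (m : Fin n → ℤ) :
    pairC (u + v) m = pairC u m + pairC v m := by
  simp only [pairC, Pi.add_apply, add_mul, Finset.sum_add_distrib]

theorem pairC_sub_right (u : Fin n → ℂ) (m k : Fin n → ℤ) :
    pairC u (m - k) = pairC u m - pairC u k := by
  simp only [pairC, Pi.sub_apply, Int.cast_sub, mul_sub, Finset.sum_sub_distrib]

theorem exists_pairC_ne_zero {s : Fin n → ℤ} (hs : s ≠ 0) : ∃ u, pairC u s ≠ 0 := by
  obtain ⟨i, hi⟩ := Function.ne_iff.mp hs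
  exact ⟨Pi.single i 1, by simpa [pairC, Pi.single_apply] using hi⟩

theorem exists_pairC_ne_zero_and {s t : Fin n → ℤ} (hs : s ≠ 0) (ht : t ≠ 0) :
    ∃ u, pairC u s ≠ 0 ∧ pairC u t ≠ 0 := by
  obtain ⟨u, hus⟩ := exists_pairC_ne_zero hs
  obtain ⟨v, hvt⟩ := exists_pairC_ne_zero ht
  by_cases hut : pairC u t = 0
  · by_cases hvs : pairC v s = 0
    · exact ⟨u + v, by simpa [pairC_add_left, hvs] using hus,
        by simpa [pairC_add_left, hut] using hvt⟩
    · exact ⟨v, hvs, hvt⟩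
  · exact ⟨u, hus, hut⟩

end Pairing

namespace WittRep

variable {n : ℕ} {B : Type*} [CommRing B] [Algebra ℂ B] {V : Type*} [AddCommGroup V] [Module ℂ V]

section Operators

variable (ρ : WittRep n B V)

theorem D_zero_u (r : Fin n → ℤ) (b : B) : ρ.D 0 r b = 0 := by
  simpa using ρ.D_smul_u 0 0 r b

theorem D_zero_b (u : Fin n → ℂ) (r : Fin n → ℤ) : ρ.D u r 0 = 0 := by
  simpa using ρ.D_smul_b 0 u r 0

theorem D_sub_u (u v : Fin n → ℂ) (r : Fin n → ℤ) (b : B) :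
    ρ.D (u - v) r b = ρ.D u r b - ρ.D v r b := by
  rw [eq_sub_iff_add_eq, ← D_add_u, sub_add_cancel]

theorem comm_DD_apply (u v : Fin n → ℂ) (r s : Fin n → ℤ) (a b : B) (x : V) :
    ρ.D u r a (ρ.D v s b x) - ρ.D v s b (ρ.D u r a x) =
      pairC u s • ρ.D v (r + s) (a * b) x - pairC v r • ρ.D u (r + s) (a * b) x := by
  simpa [Ring.lie_def, D_sub_u, D_smul_u] using LinearMap.congr_fun (ρ.comm_DD u r a v s b) x

theorem comm_cartan_apply (u v : Fin n → ℂ) (r : Fin n → ℤ) (a b : B) (x : V) :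
    ρ.D v 0 a (ρ.D u r b x) - ρ.D u r b (ρ.D v 0 a x) = pairC v r • ρ.D u r (a * b) x := by
  simpa [pairC] using ρ.comm_DD_apply v u 0 r a b x

theorem D_mem_weightSpace {lam : Fin n → ℂ} (u : Fin n → ℂ) (r : Fin n → ℤ) (b : B) {x : V}
    (hx : x ∈ ρ.weightSpace lam) : ρ.D u r b x ∈ ρ.weightSpace (lam + Int.cast ∘ r) := by
  intro v
  have hbracket := ρ.comm_cartan_apply u v r 1 b x
  rw [hx v, map_smul, one_mul, sub_eq_iff_eq_add, ← add_smul] at hbracket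
  have hweight : pairCC v (lam + Int.cast ∘ r) = pairC v r + pairCC v lam := by
    simp only [pairC, pairCC, Pi.add_apply, Function.comp_apply, mul_add, Finset.sum_add_distrib,
      add_comm]
  rw [hbracket, hweight]

theorem cartan_mem_weightSpace {lam : Fin n → ℂ} (u : Fin n → ℂ) (b : B) {x : V}
    (hx : x ∈ ρ.weightSpace lam) : ρ.D u 0 b x ∈ ρ.weightSpace lam := by
  have hzero : lam + Int.cast ∘ (0 : Fin n → ℤ) = lam := by ext; simp
  simpa only [hzero] using ρ.D_mem_weightSpace u 0 b hx

/-- The degree `r ≠ s` lets one choose `p` with `(p | s) ≠ 0` and `(p | s - r) ≠ 0`; the bracket of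
`D(p,r) ⊗ a` with `D(p,s) ⊗ b` then isolates `D(p,r+s) ⊗ ab`. -/
theorem D_mul_apply_eq_zero {r s : Fin n → ℤ} (hrs : r ≠ s) (hs : s ≠ 0) {a b : B} {x : V}
    (ha : ∀ u, ρ.D u r a x = 0) (hb : ∀ u, ρ.D u s b x = 0) (u : Fin n → ℂ) :
    ρ.D u (r + s) (a * b) x = 0 := by
  obtain ⟨p, hps, hpsr⟩ := exists_pairC_ne_zero_and hs (sub_ne_zero.mpr hrs.symm)
  have hbracket (v : Fin n → ℂ) :
      pairC p s • ρ.D v (r + s) (a * b) x = pairC v r • ρ.D p (r + s) (a * b) x := by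
    have h := ρ.comm_DD_apply p v r s a b x
    rw [ha, hb, map_zero, map_zero, sub_zero] at h
    exact sub_eq_zero.mp h.symm
  have hself : ρ.D p (r + s) (a * b) x = 0 := by
    have h := sub_eq_zero.mpr (hbracket p)
    rw [← sub_smul, ← pairC_sub_right] at h
    exact (smul_eq_zero.mp h).resolve_left hpsr
  have h := hbracket u
  rw [hself, smul_zero] at h
  exact (smul_eq_zero.mp h).resolve_left hps

end Operators

section WeightAnnihilator

/-- The largest ideal `I` of `B` such that the degree `r` part of `Wₙ ⊗ I` kills the weight space
`V_λ`. The factor `c` makes this an ideal for every `r`; it is superfluous for `r ≠ 0`, by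
`mem_weightAnnihilator_iff`. -/
def weightAnnihilator (ρ : WittRep n B V) (lam : Fin n → ℂ) (r : Fin n → ℤ) : Ideal B where
  carrier := {b | ∀ c u, ∀ x ∈ ρ.weightSpace lam, ρ.D u r (c * b) x = 0}
  add_mem' := fun ha hb c u x hx => by
    rw [mul_add, D_add_b, LinearMap.add_apply, ha c u x hx, hb c u x hx, add_zero]
  zero_mem' := fun c u x _ => by rw [mul_zero, D_zero_b, LinearMap.zero_apply]
  smul_mem' := fun a b hb c u x hx => by rw [smul_eq_mul, ← mul_assoc, hb (c * a) u x hx]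

/-- The operators `D(u,r) ⊗ b` on the weight space `V_λ`, as a linear function of `b`. -/
def weightMap (ρ : WittRep n B V) (lam : Fin n → ℂ) (r : Fin n → ℤ) :
    B →ₗ[ℂ] (Fin n → ℂ) →ₗ[ℂ] ρ.weightSpace lam →ₗ[ℂ] ρ.weightSpace (lam + Int.cast ∘ r) :=
  LinearMap.mk₂ ℂ (fun b u => (ρ.D u r b).restrict fun _ hx => ρ.D_mem_weightSpace u r b hx)
    (fun a b u => by ext; simp [D_add_b]) (fun c b u => by ext; simp [D_smul_b])
    (fun b u v => by ext; simp [D_add_u]) (fun c b u => by ext; simp [D_smul_u])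

variable (ρ : WittRep n B V) (lam : Fin n → ℂ)

theorem weightMap_eq_zero_iff (r : Fin n → ℤ) (b : B) :
    ρ.weightMap lam r b = 0 ↔ ∀ u, ∀ x ∈ ρ.weightSpace lam, ρ.D u r b x = 0 := by
  refine ⟨fun h u x hx => ?_, fun h => LinearMap.ext fun u => LinearMap.ext fun x => ?_⟩
  · exact congrArg Subtype.val (LinearMap.congr_fun (LinearMap.congr_fun h u) ⟨x, hx⟩)
  · exact Subtype.ext (h u x x.2)

theorem apply_eq_zero_of_mem_weightAnnihilator {r : Fin n → ℤ} {b : B}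
    (hb : b ∈ ρ.weightAnnihilator lam r) (u : Fin n → ℂ) {x : V} (hx : x ∈ ρ.weightSpace lam) :
    ρ.D u r b x = 0 := by
  simpa only [one_mul] using hb 1 u x hx

theorem mem_weightAnnihilator_iff {r : Fin n → ℤ} (hr : r ≠ 0) {b : B} :
    b ∈ ρ.weightAnnihilator lam r ↔ ∀ u, ∀ x ∈ ρ.weightSpace lam, ρ.D u r b x = 0 := by
  refine ⟨fun hb u x => ρ.apply_eq_zero_of_mem_weightAnnihilator lam hb u, fun hb c u x hx => ?_⟩
  obtain ⟨v, hv⟩ := exists_pairC_ne_zero hr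
  have h := ρ.comm_cartan_apply u v r c b x
  rw [hb u x hx, hb u _ (ρ.cartan_mem_weightSpace v c hx), map_zero, sub_zero] at h
  exact (smul_eq_zero.mp h.symm).resolve_left hv

theorem weightMap_eq_zero_iff_mem {r : Fin n → ℤ} (hr : r ≠ 0) (b : B) :
    ρ.weightMap lam r b = 0 ↔ b ∈ ρ.weightAnnihilator lam r :=
  (ρ.weightMap_eq_zero_iff lam r b).trans (ρ.mem_weightAnnihilator_iff lam hr).symm

theorem exists_injective_quotient_weightAnnihilator {r : Fin n → ℤ} (hr : r ≠ 0) :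
    ∃ f : (B ⧸ ρ.weightAnnihilator lam r) →ₗ[ℂ]
      (Fin n → ℂ) →ₗ[ℂ] ρ.weightSpace lam →ₗ[ℂ] ρ.weightSpace (lam + Int.cast ∘ r),
      Function.Injective f :=
  exists_injective_quotient_of_eq_zero_iff_mem
    (F := (Fin n → ℂ) →ₗ[ℂ] ρ.weightSpace lam →ₗ[ℂ] ρ.weightSpace (lam + Int.cast ∘ r))
    _ _ (ρ.weightMap_eq_zero_iff_mem lam hr)

theorem weightAnnihilator_mul_le {r s : Fin n → ℤ} (hrs : r ≠ s) (hs : s ≠ 0) :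
    ρ.weightAnnihilator lam r * ρ.weightAnnihilator lam s ≤ ρ.weightAnnihilator lam (r + s) := by
  refine Ideal.mul_le.mpr fun a ha b hb c u x hx => ?_
  rw [← mul_assoc]
  exact ρ.D_mul_apply_eq_zero hrs hs (fun v => ha c v x hx)
    (fun v => ρ.apply_eq_zero_of_mem_weightAnnihilator lam hb v hx) u

section FiniteDimensional

variable [∀ mu, FiniteDimensional ℂ (ρ.weightSpace mu)]

theorem finite_quotient_weightAnnihilator {r : Fin n → ℤ} (hr : r ≠ 0) :
    Module.Finite ℂ (B ⧸ ρ.weightAnnihilator lam r) := by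
  obtain ⟨f, hf⟩ := ρ.exists_injective_quotient_weightAnnihilator lam hr
  exact Module.Finite.of_injective f hf

theorem finrank_quotient_weightAnnihilator_le {r : Fin n → ℤ} (hr : r ≠ 0) :
    Module.finrank ℂ (B ⧸ ρ.weightAnnihilator lam r) ≤
      n * (Module.finrank ℂ (ρ.weightSpace lam) *
        Module.finrank ℂ (ρ.weightSpace (lam + Int.cast ∘ r))) := by
  obtain ⟨f, hf⟩ := ρ.exists_injective_quotient_weightAnnihilator lam hr
  simpa only [Module.finrank_linearMap, Module.finrank_fin_fun]
    using LinearMap.finrank_le_finrank_of_injective hf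

theorem exists_pow_le_weightAnnihilator [Nonempty (Fin n)] [Algebra.FiniteType ℂ B] :
    ∃ K : Ideal B, Module.Finite ℂ (B ⧸ K) ∧ ∀ r, ∃ m, K ^ m ≤ ρ.weightAnnihilator lam r := by
  let generators : Finset (Fin n × ℤ) := Finset.univ ×ˢ {1, 2, -1, -2}
  let I (p : Fin n × ℤ) : Ideal B := ρ.weightAnnihilator lam (Pi.single p.1 p.2)
  refine ⟨∏ p ∈ generators, I p, finite_quotient_prod fun p hp => ?_, mem_of_single_mem ?_ ?_⟩
  · refine ρ.finite_quotient_weightAnnihilator lam fun h => ?_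
    rw [Pi.single_eq_zero_iff] at h
    simp [generators, h] at hp
  · rintro r ⟨l, hl⟩ s ⟨m, hm⟩ hrs hs
    refine ⟨l + m, ?_⟩
    rw [pow_add]
    exact (Ideal.mul_mono hl hm).trans (ρ.weightAnnihilator_mul_le lam hrs hs)
  · intro i c hc
    refine ⟨1, ?_⟩
    rw [pow_one]
    exact Ideal.prod_le_inf.trans (Finset.inf_le (f := I) (b := (i, c))
      (Finset.mem_product.mpr ⟨Finset.mem_univ i, hc⟩))

end FiniteDimensional

end WeightAnnihilator

theorem UniformlyBounded.finiteDimensional {ρ : WittRep n B V} (hub : ρ.UniformlyBounded)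
    (lam : Fin n → ℂ) : FiniteDimensional ℂ (ρ.weightSpace lam) := by
  obtain ⟨N, hN⟩ := hub
  exact Module.rank_lt_aleph0_iff.mp ((hN lam).trans_lt Cardinal.natCast_lt_aleph0)

theorem UniformlyBounded.exists_finite_quotient_le_weightAnnihilator [Algebra.FiniteType ℂ B]
    {ρ : WittRep n B V} (hub : ρ.UniformlyBounded) (lam : Fin n → ℂ) :
    ∃ J : Ideal B, Module.Finite ℂ (B ⧸ J) ∧ ∀ r, J ≤ ρ.weightAnnihilator lam r := by
  rcases isEmpty_or_nonempty (Fin n) with _ | _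
  · refine ⟨⊤, inferInstance, fun r b _ c u x _ => ?_⟩
    rw [Subsingleton.elim u 0, D_zero_u, LinearMap.zero_apply]
  have := hub.finiteDimensional
  obtain ⟨N, hN⟩ := hub
  have hfinrank (mu : Fin n → ℂ) : Module.finrank ℂ (ρ.weightSpace mu) ≤ N :=
    Module.finrank_le_of_rank_le (hN mu)
  obtain ⟨K, hK, hpow⟩ := ρ.exists_pow_le_weightAnnihilator lam
  obtain ⟨m₀, hm₀⟩ := hpow 0
  let M : ℕ := n * (N * N)
  refine ⟨K ^ (m₀ + M), finite_quotient_pow hK _, fun r => ?_⟩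
  by_cases hr : r = 0
  · exact hr ▸ (Ideal.pow_le_pow_right (Nat.le_add_right m₀ M)).trans hm₀
  · have := ρ.finite_quotient_weightAnnihilator lam hr
    obtain ⟨m, hm⟩ := hpow r
    have hcodim : Module.finrank ℂ (B ⧸ ρ.weightAnnihilator lam r) ≤ m₀ + M :=
      calc _ ≤ n * _ := ρ.finrank_quotient_weightAnnihilator_le lam hr
        _ ≤ M := Nat.mul_le_mul_left n (Nat.mul_le_mul (hfinrank _) (hfinrank _))
        _ ≤ m₀ + M := Nat.le_add_left M m₀
    exact (Ideal.pow_le_pow_right hcodim).trans (pow_finrank_quotient_le hm)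

/-- The submodule of the vectors killed by `Wₙ ⊗ J`. -/
def killedVectors (ρ : WittRep n B V) (J : Ideal B) : Submodule ℂ V where
  carrier := {x | ∀ b ∈ J, ∀ u r, ρ.D u r b x = 0}
  add_mem' := fun hx hy b hb u r => by rw [map_add, hx b hb, hy b hb, add_zero]
  zero_mem' := fun _ _ _ _ => map_zero _
  smul_mem' := fun c x hx b hb u r => by rw [map_smul, hx b hb, smul_zero]

theorem killedVectors_antitone (ρ : WittRep n B V) : Antitone ρ.killedVectors :=
  fun _ _ hJ _ hx b hb => hx b (hJ hb)

theorem invariant_killedVectors (ρ : WittRep n B V) (J : Ideal B) :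
    ρ.Invariant (ρ.killedVectors J) := by
  intro v s c x hx b hb u r
  have hbracket := ρ.comm_DD_apply u v r s b c x
  have hbc : b * c ∈ J := J.mul_mem_right c hb
  rwa [hx b hb, hx _ hbc, hx _ hbc, map_zero, smul_zero, smul_zero, sub_zero, sub_zero]
    at hbracket

theorem UniformlyBounded.exists_finite_quotient_mem_killedVectors [Algebra.FiniteType ℂ B]
    {ρ : WittRep n B V} (hub : ρ.UniformlyBounded) (hw : ρ.IsWeightModule) (x : V) :
    ∃ J : Ideal B, Module.Finite ℂ (B ⧸ J) ∧ x ∈ ρ.killedVectors J := by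
  have hx : x ∈ ⨆ lam, ρ.weightSpace lam := hw ▸ Submodule.mem_top
  induction hx using Submodule.iSup_induction' with
  | mem lam x hx =>
    obtain ⟨J, hJ, hle⟩ := hub.exists_finite_quotient_le_weightAnnihilator lam
    exact ⟨J, hJ, fun b hb u r =>
      ρ.apply_eq_zero_of_mem_weightAnnihilator lam (hle r hb) u hx⟩
  | zero => exact ⟨⊤, inferInstance, zero_mem _⟩
  | add x y _ _ ihx ihy =>
    obtain ⟨I, hI, hxI⟩ := ihx
    obtain ⟨J, hJ, hyJ⟩ := ihy
    exact ⟨I * J, finite_quotient_mul hI hJ,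
      add_mem (ρ.killedVectors_antitone Ideal.mul_le_left hxI)
        (ρ.killedVectors_antitone Ideal.mul_le_right hyJ)⟩

/-- The module is generated, over `Wₙ ⊗ B`, by finitely many vectors. -/
def IsFinitelyGenerated (ρ : WittRep n B V) : Prop :=
  ∃ F : Finset V, ∀ U : Submodule ℂ V, ρ.Invariant U → (F : Set V) ⊆ U → U = ⊤

theorem IsIrreducible.isFinitelyGenerated {ρ : WittRep n B V} (hirr : ρ.IsIrreducible) :
    ρ.IsFinitelyGenerated := by
  obtain ⟨⟨x, hx⟩, hsimple⟩ := hirr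
  refine ⟨{x}, fun U hU hxU => (hsimple U hU).resolve_left ?_⟩
  rintro rfl
  exact hx (by simpa using hxU)

end WittRep

end LoopWitt

theorem stmt3_general {n : ℕ} {B V : Type*}
    [CommRing B] [Algebra ℂ B] [Algebra.FiniteType ℂ B]
    [AddCommGroup V] [Module ℂ V]
    (ρ : WittRep n B V)
    (hw : ρ.IsWeightModule) (hub : ρ.UniformlyBounded) (hfg : ρ.IsFinitelyGenerated) :
    ∃ J : Ideal B, FiniteDimensional ℂ (B ⧸ J) ∧
      ∀ b ∈ J, ∀ (u : Fin n → ℂ) (r : Fin n → ℤ), ρ.D u r b = 0 := by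
  obtain ⟨F, hF⟩ := hfg
  choose J hJ hmem using hub.exists_finite_quotient_mem_killedVectors hw
  have hgen : (F : Set V) ⊆ ρ.killedVectors (∏ x ∈ F, J x) := fun x hx =>
    ρ.killedVectors_antitone (Ideal.prod_le_inf.trans (Finset.inf_le hx)) (hmem x)
  have htop : ρ.killedVectors (∏ x ∈ F, J x) = ⊤ := hF _ (ρ.invariant_killedVectors _) hgen
  refine ⟨∏ x ∈ F, J x, finite_quotient_prod fun x _ => hJ x, fun b hb u r => ?_⟩
  refine LinearMap.ext fun x => ?_
  have hx : x ∈ ρ.killedVectors (∏ x ∈ F, J x) := htop ▸ Submodule.mem_top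
  exact hx b hb u r

/-- A uniformly bounded irreducible weight `Wₙ ⊗ B`-module with finite
dimensional weight spaces is annihilated by `Wₙ ⊗ J` for some cofinite ideal `J` of `B`. -/
theorem stmt3 {n : ℕ} {B V : Type*}
    [CommRing B] [Algebra ℂ B] [Algebra.FiniteType ℂ B]
    [AddCommGroup V] [Module ℂ V]
    (ρ : WittRep n B V)
    (hw : ρ.IsWeightModule) (hub : ρ.UniformlyBounded)
    (hfd : ∀ lam, FiniteDimensional ℂ ↥(ρ.weightSpace lam))
    (hirr : ρ.IsIrreducible) :
    ∃ J : Ideal B, FiniteDimensional ℂ (B ⧸ J) ∧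
      ∀ b ∈ J, ∀ (u : Fin n → ℂ) (r : Fin n → ℤ), ρ.D u r b = 0 := by
  exact stmt3_general ρ hw hub hirr.isFinitelyGenerated
end
end

section
/- Let n ≥ 1. Any non-trivial irreducible uniformly bounded weight module V for the loop extended Witt algebra 𝔏_{S,n}(B) = (W_n ⋉ (S ⊗ A_n)) ⊗ B can be regarded (after a complement of S acts trivially) as an irreducible module for 𝔏(B) = (W_n ⋉ A_n) ⊗ B or for W_n ⊗ B; furthermore, regarded as an 𝔏(B)- or W_n ⊗ B-module, V is a single point evaluation module. -/
open scoped TensorProduct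

noncomputable section

open LoopWitt

/-!
Put `P = ℂⁿ × S` and write `X r p b` for the operator of `(D(u,r) + s ⊗ tʳ) ⊗ b`, `p = (u, s)`; the
bracket is then the one of a generalised Witt algebra.

A single character `η` of `B` acts. Localising at `η`, the degrees in which a nonzero vector is
moved contain `m` or `ρ - m` for almost every `m`, hence fill about half of `ℤⁿ`. If two characters
acted, one vector could be moved by `k` at the first and by `m - k` at the second for
arbitrarily many `k` and one common `m`. The results are eigenvectors of one operator `X 0 u a` with
distinct eigenvalues in one weight space, whose dimension is bounded.

The kernel of `η` acts by zero. Since `Hom` between two weight spaces has dimension at most `N²`,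
the power `a ^ (N²)` acts by zero for `a ∈ ker η`. The annihilator of the module in `B` is radical:
if `a²` acts by zero, then the multiples of `a` span an abelian ideal, which acts by nilpotent
operators with a common kernel vector, and the common kernel is a submodule.

Finally `S ⊗ 1` acts by a functional `c`. If `c s = 0`, the nilpotency of
`E (r + m) E (-m) - E m E (r - m)`, where `E m = s ⊗ tᵐ`, makes some `E m` with `m ≠ 0` nilpotent,
and the same common kernel argument shows that `s ⊗ A_n ⊗ B` acts by zero.
-/

section Commutator

variable {A : Type*} [Ring A] {d x : A}

lemma lie_mul_eq (d x y : A) : ⁅d, x * y⁆ = ⁅d, x⁆ * y + x * ⁅d, y⁆ := by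
  simp only [Ring.lie_def]; noncomm_ring

lemma lie_pow_succ (h : Commute x ⁅d, x⁆) (k : ℕ) :
    ⁅d, x ^ (k + 1)⁆ = (k + 1) • (⁅d, x⁆ * x ^ k) := by
  induction k with
  | zero => simp
  | succ k ih =>
    rw [pow_succ, lie_mul_eq, ih, (h.pow_left (k + 1)).eq, smul_mul_assoc, mul_assoc, ← pow_succ,
      succ_nsmul _ (k + 1)]

lemma lie_mul_pow_eq_zero [IsAddTorsionFree A] (h : Commute x ⁅d, x⁆) {k : ℕ}
    (hk : x ^ (k + 1) = 0) : ⁅d, x⁆ * x ^ k = 0 := by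
  have hlie := lie_pow_succ h k
  rw [hk, (Commute.zero_right d).lie_eq, eq_comm] at hlie
  exact (nsmul_eq_zero_iff_right k.succ_ne_zero).mp hlie

lemma exists_pow_ne_zero_forall_lie_mul_eq_zero [Nontrivial A] [IsAddTorsionFree A]
    (hx : IsNilpotent x) : ∃ k, x ^ k ≠ 0 ∧
      ∀ d : A, Commute x ⁅d, x⁆ → ⁅d, x⁆ * x ^ k = 0 :=
  ⟨_, pow_pred_nilpotencyClass hx, fun _ h => lie_mul_pow_eq_zero h <| by
    rw [Nat.sub_add_cancel (pos_nilpotencyClass_iff.mpr hx), pow_nilpotencyClass hx]⟩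

lemma isNilpotent_lie [IsAddTorsionFree A] (hx : IsNilpotent x) (h : Commute x ⁅d, x⁆)
    (h' : Commute ⁅d, x⁆ ⁅d, ⁅d, x⁆⁆) : IsNilpotent ⁅d, x⁆ := by
  suffices H : ∀ m j : ℕ, x ^ m * ⁅d, x⁆ ^ j = 0 → IsNilpotent ⁅d, x⁆ by
    obtain ⟨m, hm⟩ := hx
    exact H m 0 (by rw [hm, zero_mul])
  intro m
  induction m with
  | zero => exact fun j hj => ⟨j, by simpa using hj⟩
  | succ m ih =>
    -- Applying `⁅d, ·⁆` to `x ^ (m + 1) * y ^ (j + 1) = 0` trades one `x` for two factors `y`.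
    intro j hj
    refine ih (j + 2) ((nsmul_eq_zero_iff_right m.succ_ne_zero).mp ?_)
    have hzero : x ^ (m + 1) * ⁅d, x⁆ ^ (j + 1) = 0 := by
      rw [pow_succ ⁅d, x⁆, ← mul_assoc, hj, zero_mul]
    have hlie := lie_mul_eq d (x ^ (m + 1)) (⁅d, x⁆ ^ (j + 1))
    rw [hzero, (Commute.zero_right d).lie_eq, lie_pow_succ h, lie_pow_succ h', mul_smul_comm,
      (h'.pow_left j).symm.eq, ← mul_assoc, hj, zero_mul, smul_zero, add_zero, smul_mul_assoc,
      ← (h.pow_left m).eq, mul_assoc, ← pow_succ', eq_comm] at hlie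
    exact hlie

lemma lie_sub_algebraMap {R : Type*} [CommRing R] [Algebra R A] (d x : A) (c : R) :
    ⁅d, x - algebraMap R A c⁆ = ⁅d, x⁆ := by
  rw [Ring.lie_def, Ring.lie_def, mul_sub, sub_mul, Algebra.commutes, sub_sub_sub_cancel_right]

lemma lie_mem_adjoin {R : Type*} [CommRing R] [Algebra R A] {s : Set A}
    (hs : ∀ y ∈ s, ⁅d, y⁆ ∈ Algebra.adjoin R s) (hx : x ∈ Algebra.adjoin R s) :
    ⁅d, x⁆ ∈ Algebra.adjoin R s := by
  induction hx using Algebra.adjoin_induction with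
  | mem x hx => exact hs x hx
  | algebraMap c => rw [(Algebra.commute_algebraMap_right c d).lie_eq]; exact zero_mem _
  | add x y _ _ hx hy => rw [Ring.lie_def, mul_add, add_mul, add_sub_add_comm]; exact add_mem hx hy
  | mul x y hx' hy' hx hy => rw [lie_mul_eq]; exact add_mem (mul_mem hx hy') (mul_mem hx' hy)

end Commutator

lemma isNilpotent_of_smul {𝕜 A : Type*} [Field 𝕜] [Ring A] [Algebra 𝕜 A] {c : 𝕜} (hc : c ≠ 0)
    {x : A} (h : IsNilpotent (c • x)) : IsNilpotent x := by
  simpa [smul_smul, hc] using h.smul c⁻¹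

lemma isNilpotent_or_isNilpotent_of_sub {𝕜 R : Type*} [Field 𝕜] [CommRing R] [Algebra 𝕜 R]
    {x y z w : R} {c : 𝕜} (hxy : IsNilpotent (x * y - algebraMap 𝕜 R c))
    (hzy : IsNilpotent (z * y - x * x)) (hxw : IsNilpotent (x * w)) :
    IsNilpotent x ∨ IsNilpotent w := by
  simp only [← mem_nilradical] at *
  by_cases hc : c = 0
  · left
    rw [hc, map_zero, sub_zero] at hxy
    have hcube : x ^ 3 ∈ nilradical R := by
      have e : x ^ 3 = z * (x * y) - x * (z * y - x * x) := by ring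
      exact e ▸ sub_mem (Ideal.mul_mem_left _ _ hxy) (Ideal.mul_mem_left _ _ hzy)
    exact Ideal.radical_isRadical _ ⟨3, hcube⟩
  · right
    have hcw : algebraMap 𝕜 R c * w ∈ nilradical R := by
      have e : algebraMap 𝕜 R c * w = y * (x * w) - w * (x * y - algebraMap 𝕜 R c) := by ring
      exact e ▸ sub_mem (Ideal.mul_mem_left _ _ hxw) (Ideal.mul_mem_left _ _ hxy)
    exact (Ideal.unit_mul_mem_iff_mem _ ((IsUnit.mk0 c hc).map _)).mp hcw

section LinearAlgebra

variable {𝕜 V : Type*} [Field 𝕜] [AddCommGroup V] [Module 𝕜 V]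

open Module

lemma mem_maxGenEigenspace_of_commute_lie {d T : End 𝕜 V} (h : Commute T ⁅d, T⁆) {c : 𝕜} {x : V}
    (hx : x ∈ T.maxGenEigenspace c) : d x ∈ T.maxGenEigenspace c := by
  rw [End.mem_maxGenEigenspace, ← Algebra.algebraMap_eq_smul_one] at hx ⊢
  obtain ⟨k, hk⟩ := hx
  set S := T - algebraMap 𝕜 _ c
  have hlie : ⁅d, S⁆ = ⁅d, T⁆ := lie_sub_algebraMap d T c
  have hcomm : Commute S ⁅d, S⁆ := hlie ▸ h.sub_left (Algebra.commute_algebraMap_left c _)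
  have hdx := LinearMap.congr_fun (lie_pow_succ hcomm k) x
  simp only [Ring.lie_def, LinearMap.sub_apply, LinearMap.smul_apply, End.mul_apply, pow_succ', hk,
    map_zero, smul_zero, zero_sub, neg_eq_zero] at hdx
  exact ⟨k + 1, by rw [pow_succ', End.mul_apply, hdx]⟩

lemma pow_apply_eq_zero_of_finrank_le {f : End 𝕜 V} {U : Submodule 𝕜 V} [FiniteDimensional 𝕜 U]
    (hf : ∀ x ∈ U, f x ∈ U) {N : ℕ} (hN : finrank 𝕜 U ≤ N) {x : V} (hx : x ∈ U) {k : ℕ}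
    (hk : (f ^ k) x = 0) : (f ^ N) x = 0 := by
  have hmem : (⟨x, hx⟩ : U) ∈ LinearMap.ker (f.restrict hf ^ k) := by
    rw [LinearMap.mem_ker, End.pow_restrict k]; exact Subtype.ext hk
  have hzero := End.ker_pow_le_ker_pow_finrank (f.restrict hf) k hmem
  rw [LinearMap.mem_ker, End.pow_restrict] at hzero
  exact End.pow_map_zero_of_le hN (congrArg Subtype.val hzero)

lemma exists_mem_eigenspace_ne_zero [IsAlgClosed 𝕜] {f : End 𝕜 V} {U : Submodule 𝕜 V}
    [FiniteDimensional 𝕜 U] (hU : U ≠ ⊥) (hf : ∀ x ∈ U, f x ∈ U) :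
    ∃ c, ∃ x ∈ U, x ≠ 0 ∧ x ∈ f.eigenspace c := by
  have : Nontrivial U := Submodule.nontrivial_iff_ne_bot.mpr hU
  obtain ⟨c, hc⟩ := End.exists_eigenvalue (f.restrict hf)
  obtain ⟨x, hx⟩ := hc.exists_hasEigenvector
  exact ⟨c, x, x.2, fun h => hx.2 (Subtype.ext h),
    End.mem_eigenspace_iff.mpr (congrArg Subtype.val hx.apply_eq_smul)⟩

lemma exists_common_eigenvector_of_commute [IsAlgClosed 𝕜] {ι : Type*} {f : ι → End 𝕜 V}
    (hc : ∀ i j, Commute (f i) (f j)) (U : Submodule 𝕜 V) [FiniteDimensional 𝕜 U]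
    (hU : U ≠ ⊥) (hf : ∀ i, ∀ x ∈ U, f i x ∈ U) :
    ∃ x ∈ U, x ≠ 0 ∧ ∃ χ : ι → 𝕜, ∀ i, f i x = χ i • x := by
  induction hd : finrank 𝕜 U using Nat.strong_induction_on generalizing U with
  | _ d ih =>
  by_cases hs : ∀ i, ∃ c : 𝕜, U ≤ (f i).eigenspace c
  · choose χ hχ using hs
    obtain ⟨x, hx, hx0⟩ := U.exists_mem_ne_zero_of_ne_bot hU
    exact ⟨x, hx, hx0, χ, fun i => End.mem_eigenspace_iff.mp (hχ i hx)⟩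
  · push Not at hs
    obtain ⟨i, hi⟩ := hs
    obtain ⟨c, y, hyU, hy0, hy⟩ := exists_mem_eigenspace_ne_zero hU (hf i)
    have hlt : U ⊓ (f i).eigenspace c < U := inf_lt_left.mpr (hi c)
    have : FiniteDimensional 𝕜 ↥(U ⊓ (f i).eigenspace c) := Submodule.finiteDimensional_of_le hlt.le
    obtain ⟨x, hx, hx0⟩ := ih _ (hd ▸ Submodule.finrank_lt_finrank_of_lt hlt)
      (U ⊓ (f i).eigenspace c)
      ((Submodule.ne_bot_iff _).mpr ⟨y, Submodule.mem_inf.mpr ⟨hyU, hy⟩, hy0⟩)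
      (fun j x hx => ⟨hf j x hx.1,
        End.mapsTo_genEigenspace_of_comm (hc i j) c 1 hx.2⟩) rfl
    exact ⟨x, hx.1, hx0⟩

lemma exists_mem_ne_zero_forall_apply_eq_zero [IsAlgClosed 𝕜] {ι : Type*} {f : ι → End 𝕜 V}
    (hc : ∀ i j, Commute (f i) (f j)) (hnil : ∀ i, IsNilpotent (f i)) (U : Submodule 𝕜 V)
    [FiniteDimensional 𝕜 U] (hU : U ≠ ⊥) (hf : ∀ i, ∀ x ∈ U, f i x ∈ U) :
    ∃ x ∈ U, x ≠ 0 ∧ ∀ i, f i x = 0 := by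
  obtain ⟨x, hx, hx0, χ, hχ⟩ := exists_common_eigenvector_of_commute hc U hU hf
  refine ⟨x, hx, hx0, fun i => ?_⟩
  have hvec : (f i).HasEigenvector (χ i) x := ⟨End.mem_eigenspace_iff.mpr (hχ i), hx0⟩
  rw [hχ, (End.hasEigenvalue_of_hasEigenvector hvec).isNilpotent_of_isNilpotent (hnil i)
    |>.eq_zero, zero_smul]

lemma card_le_finrank_of_eigenvectors {f : End 𝕜 V} {U : Submodule 𝕜 V} [FiniteDimensional 𝕜 U]
    {ι : Type*} (s : Finset ι) {μ : ι → 𝕜} (hμ : Set.InjOn μ s)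
    (h : ∀ i ∈ s, ∃ x ∈ U, x ≠ 0 ∧ f x = μ i • x) : s.card ≤ finrank 𝕜 U := by
  choose! x hxU hx0 hx using h
  have hli : LinearIndependent 𝕜 (fun i : s => (⟨x i, hxU i i.2⟩ : U)) :=
    .of_comp U.subtype <| End.eigenvectors_linearIndependent' f (fun i : s => μ i)
      (fun i j hij => Subtype.ext (hμ i.2 j.2 hij)) _
      fun i => ⟨End.mem_eigenspace_iff.mpr (hx i i.2), hx0 i i.2⟩
  simpa using hli.fintype_card_le_finrank

lemma forall_of_forall_dual_ne_zero {f : Dual 𝕜 V} (hf : f ≠ 0) {Q : V → Prop}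
    (hsub : ∀ p q, Q p → Q q → Q (p - q)) (h : ∀ p, f p ≠ 0 → Q p) (p : V) : Q p := by
  by_cases hp : f p = 0
  · obtain ⟨u, hu⟩ := DFunLike.ne_iff.mp hf
    simpa using hsub (p + u) u (h _ (by rwa [map_add, hp, zero_add])) (h u hu)
  · exact h p hp

end LinearAlgebra

section FiniteCodimension

variable {𝕜 B : Type*} [Field 𝕜] [CommRing B] [Algebra 𝕜 B] {I J : Ideal B}

lemma sub_algebraMap_mem_ker (η : B →ₐ[𝕜] 𝕜) (b : B) :
    b - algebraMap 𝕜 B (η b) ∈ RingHom.ker η := by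
  simp [RingHom.mem_ker]

lemma exists_algHom_ker_eq [IsAlgClosed 𝕜] [J.IsPrime] [FiniteDimensional 𝕜 (B ⧸ J)] :
    ∃ η : B →ₐ[𝕜] 𝕜, RingHom.ker η = J := by
  let e : 𝕜 ≃ₐ[𝕜] B ⧸ J :=
    .ofBijective (Algebra.ofId 𝕜 (B ⧸ J)) IsAlgClosed.algebraMap_bijective_of_isIntegral
  refine ⟨e.symm.toAlgHom.comp (Ideal.Quotient.mkₐ 𝕜 J), ?_⟩
  ext b
  simp [RingHom.mem_ker, Ideal.Quotient.eq_zero_iff_mem]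

lemma finiteDimensional_quotient_of_le (h : I ≤ J) [FiniteDimensional 𝕜 (B ⧸ I)] :
    FiniteDimensional 𝕜 (B ⧸ J) :=
  Module.Finite.of_surjective (Ideal.Quotient.factorₐ 𝕜 h).toLinearMap
    (Ideal.Quotient.factor_surjective h)

lemma exists_injective_quotient_of_ker_eq {F : Type*} [AddCommGroup F] [Module 𝕜 F]
    {Φ : B →ₗ[𝕜] F} (h : LinearMap.ker Φ = I.restrictScalars 𝕜) :
    ∃ g : (B ⧸ I) →ₗ[𝕜] F, Function.Injective g :=
  ⟨(I.restrictScalars 𝕜).liftQ Φ h.ge ∘ₗ (Submodule.Quotient.restrictScalarsEquiv 𝕜 I).symm,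
    (LinearMap.ker_eq_bot.mp (Submodule.ker_liftQ_eq_bot _ Φ h.ge h.le)).comp
      (Submodule.Quotient.restrictScalarsEquiv 𝕜 I).symm.injective⟩

lemma exists_notMem_forall_mul_sub_smul_mem [FiniteDimensional 𝕜 (B ⧸ I)] {η : B →ₐ[𝕜] 𝕜}
    (h : I ≤ RingHom.ker η) : ∃ b ∉ I, ∀ a, a * b - η a • b ∈ I := by
  -- `ker η / I` is a minimal, hence an associated, prime of the Artinian ring `B ⧸ I`.
  have : IsArtinianRing (B ⧸ I) := IsArtinianRing.of_finite 𝕜 _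
  let η' : B ⧸ I →ₐ[𝕜] 𝕜 := Ideal.Quotient.liftₐ I η h
  have hmin : RingHom.ker η' ∈ (Module.annihilator (B ⧸ I) (B ⧸ I)).minimalPrimes := by
    have : (RingHom.ker η').IsPrime := RingHom.ker_isPrime _
    rw [Module.annihilator_eq_bot.mpr inferInstance]
    exact Ideal.mem_minimalPrimes_of_krullDimLE_zero _
  obtain ⟨-, y, hy⟩ := Submodule.isAssociatedPrime_iff.mp
    (Module.associatedPrimes.minimalPrimes_annihilator_subset_associatedPrimes _ _ hmin)
  obtain ⟨b, rfl⟩ := Ideal.Quotient.mk_surjective y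
  have mem_ker_iff (a : B) : a ∈ RingHom.ker η ↔ a * b ∈ I := by
    have := SetLike.ext_iff.mp hy (Ideal.Quotient.mk I a)
    rwa [Submodule.mem_colon_singleton, smul_eq_mul, ← map_mul, Submodule.mem_bot,
      Ideal.Quotient.eq_zero_iff_mem] at this
  refine ⟨b, fun hb => one_ne_zero (α := 𝕜) ?_, fun a => ?_⟩
  · simpa [RingHom.mem_ker] using (mem_ker_iff 1).mpr (by rwa [one_mul])
  · simpa only [sub_mul, ← Algebra.smul_def] using (mem_ker_iff _).mp (sub_algebraMap_mem_ker η a)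

lemma pow_mem_of_mem_radical_of_finrank_le [FiniteDimensional 𝕜 (B ⧸ I)] {d : ℕ}
    (hd : Module.finrank 𝕜 (B ⧸ I) ≤ d) {a : B} (ha : a ∈ I.radical) : a ^ d ∈ I := by
  obtain ⟨k, hk⟩ := ha
  have mem_iff (j : ℕ) :
      (1 : B ⧸ I) ∈ LinearMap.ker (LinearMap.mulLeft 𝕜 (Ideal.Quotient.mk I a) ^ j) ↔
        a ^ j ∈ I := by
    rw [LinearMap.mem_ker, LinearMap.pow_mulLeft, LinearMap.mulLeft_apply, mul_one, ← map_pow,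
      Ideal.Quotient.eq_zero_iff_mem]
  have hmem := (mem_iff _).mp (Module.End.ker_pow_le_ker_pow_finrank _ k ((mem_iff k).mpr hk))
  exact I.mem_of_dvd (pow_dvd_pow a hd) hmem

end FiniteCodimension

section Counting

variable {ι : Type*} [Fintype ι]

/-- The cube `[-c, c]^ι` of lattice points, used to compare sizes of infinite subsets of `ℤ^ι`. -/
def cube (ι : Type*) [Fintype ι] [DecidableEq ι] (c : ℕ) : Finset (ι → ℤ) :=
  Finset.Icc (fun _ => -(c : ℤ)) (fun _ => c)

lemma mem_cube [DecidableEq ι] {c : ℕ} {m : ι → ℤ} : m ∈ cube ι c ↔ ∀ i, |m i| ≤ c := by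
  simp only [cube, Finset.mem_Icc, Pi.le_def, abs_le, forall_and]

lemma card_cube [DecidableEq ι] (c : ℕ) : (cube ι c).card = (2 * c + 1) ^ Fintype.card ι := by
  have hside : ((c : ℤ) + 1 + c).toNat = 2 * c + 1 := by omega
  simp [cube, Pi.card_Icc, hside]

lemma card_cube_add_le [DecidableEq ι] {c R : ℕ} (h : R ≤ c) :
    (cube ι (c + R)).card ≤ 2 ^ Fintype.card ι * (cube ι c).card := by
  rw [card_cube, card_cube, ← mul_pow]
  exact Nat.pow_le_pow_left (by omega) _

lemma card_cube_le_of_mem_or_sub_mem [DecidableEq ι] {S : Set (ι → ℤ)} [DecidablePred (· ∈ S)]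
    {ρ : ι → ℤ} {R : ℕ} (hρ : ρ ∈ cube ι R) {F : Finset (ι → ℤ)}
    (hF : ∀ m ∉ F, m ∈ S ∨ ρ - m ∈ S) (c : ℕ) :
    (cube ι c).card ≤ 2 * ((cube ι (c + R)).filter (· ∈ S)).card + F.card := by
  set T := (cube ι (c + R)).filter (· ∈ S)
  have hcover : cube ι c ⊆ (T ∪ T.image (ρ - ·)) ∪ F := by
    intro m hm
    by_cases hmF : m ∈ F
    · exact Finset.mem_union_right _ hmF
    have hm' := mem_cube.mp hm
    refine Finset.mem_union_left _ ?_
    obtain hS | hS := hF m hmF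
    · exact Finset.mem_union_left _ <| Finset.mem_filter.mpr
        ⟨mem_cube.mpr fun i => (hm' i).trans (by simp), hS⟩
    · refine Finset.mem_union_right _ <| Finset.mem_image.mpr
        ⟨ρ - m, Finset.mem_filter.mpr ⟨mem_cube.mpr fun i => ?_, hS⟩, sub_sub_cancel _ _⟩
      calc |(ρ - m) i| ≤ |ρ i| + |m i| := abs_sub _ _
        _ ≤ ((c + R : ℕ) : ℤ) := by push_cast; linarith [mem_cube.mp hρ i, hm' i]
  calc (cube ι c).card ≤ ((T ∪ T.image (ρ - ·)) ∪ F).card := Finset.card_le_card hcover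
    _ ≤ (T.card + (T.image (ρ - ·)).card) + F.card :=
      (Finset.card_union_le _ _).trans (Nat.add_le_add_right (Finset.card_union_le _ _) _)
    _ ≤ 2 * T.card + F.card := by
      rw [two_mul]
      exact Nat.add_le_add_right (Nat.add_le_add_left Finset.card_image_le _) _

lemma exists_lt_card_forall_mem_of_lt_sum {κ α : Type*} {K : Finset κ} {T : Finset α} {N : ℕ}
    (S : κ → Set α) [∀ k, DecidablePred (· ∈ S k)]
    (h : T.card * N < ∑ k ∈ K, (T.filter (· ∈ S k)).card) :
    ∃ m, ∃ K' ⊆ K, N < K'.card ∧ ∀ k ∈ K', m ∈ S k := by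
  contrapose! h
  refine (Finset.sum_card_bipartiteAbove_eq_sum_card_bipartiteBelow fun k m => m ∈ S k).trans_le ?_
  refine Finset.sum_le_card_nsmul _ _ _ fun m _ => not_lt.mp fun hlt => ?_
  obtain ⟨k, hk, hk'⟩ := h m _ (Finset.filter_subset _ _) hlt
  exact hk' (Finset.mem_filter.mp hk).2

lemma exists_lt_card_forall_mem_of_finite [Nonempty ι] {κ : Type*} {N : ℕ} (K : Finset κ)
    (hK : 4 * N * 2 ^ Fintype.card ι < K.card) (S : κ → Set (ι → ℤ)) (ρ : κ → ι → ℤ)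
    (h : ∀ k ∈ K, {m | m ∉ S k ∧ ρ k - m ∉ S k}.Finite) :
    ∃ m, ∃ K' ⊆ K, N < K'.card ∧ ∀ k ∈ K', m ∈ S k := by
  classical
  -- Each `S k` contains almost half of every large cube `[-c, c]^ι`, translated by at most `R`.
  choose! F hF using fun k hk => (h k hk).exists_finset
  obtain ⟨R, hR⟩ : ∃ R : ℕ, ∀ k ∈ K, ρ k ∈ cube ι R :=
    ⟨K.sup fun k => Finset.univ.sup fun i => (ρ k i).natAbs, fun k hk => mem_cube.mpr fun i => by
      rw [Int.abs_eq_natAbs, Nat.cast_le]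
      exact (Finset.le_sup (f := fun i => (ρ k i).natAbs) (Finset.mem_univ i)).trans
        (Finset.le_sup (f := fun k => Finset.univ.sup fun i => (ρ k i).natAbs) hk)⟩
  obtain ⟨e, he⟩ : ∃ e, ∀ k ∈ K, (F k).card ≤ e :=
    ⟨K.sup fun k => (F k).card, fun k hk => Finset.le_sup (f := fun k => (F k).card) hk⟩
  set c := R + e
  have hec : 2 * e < (cube ι c).card :=
    calc 2 * e < 2 * c + 1 := by omega
      _ ≤ (cube ι c).card := (Nat.le_self_pow Fintype.card_ne_zero _).trans_eq (card_cube c).symm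
  refine exists_lt_card_forall_mem_of_lt_sum (T := cube ι (c + R)) S ?_
  have hquarter : ∀ k ∈ K, (cube ι c).card ≤ 4 * ((cube ι (c + R)).filter (· ∈ S k)).card := by
    intro k hk
    have hhalf := card_cube_le_of_mem_or_sub_mem (S := S k) (hR k hk) (F := F k)
      (fun m hm => by by_contra! hm'; exact hm ((hF k hk m).mpr hm')) c
    have := he k hk
    omega
  refine lt_of_mul_lt_mul_left (a := 4) ?_ (Nat.zero_le _)
  calc 4 * ((cube ι (c + R)).card * N)
      ≤ 4 * ((2 ^ Fintype.card ι * (cube ι c).card) * N) := by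
        gcongr
        exact card_cube_add_le (Nat.le_add_right R e)
    _ = 4 * N * 2 ^ Fintype.card ι * (cube ι c).card := by ring
    _ < K.card * (cube ι c).card := Nat.mul_lt_mul_of_pos_right hK (by omega)
    _ = ∑ _k ∈ K, (cube ι c).card := by rw [Finset.sum_const, smul_eq_mul]
    _ ≤ ∑ k ∈ K, 4 * ((cube ι (c + R)).filter (· ∈ S k)).card := Finset.sum_le_sum hquarter
    _ = 4 * ∑ k ∈ K, ((cube ι (c + R)).filter (· ∈ S k)).card := (Finset.mul_sum _ _ _).symm

lemma infinite_of_finite_notMem_and_sub_notMem {G : Type*} [AddCommGroup G] [Infinite G]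
    {S : Set G} {ρ : G} (h : {m | m ∉ S ∧ ρ - m ∉ S}.Finite) : S.Infinite := by
  intro hS
  refine Set.infinite_univ (((hS.union (hS.image (ρ - ·))).union h).subset fun m _ => ?_)
  by_cases hm : m ∈ S
  · exact .inl (.inl hm)
  by_cases hm' : ρ - m ∈ S
  · exact .inl (.inr ⟨_, hm', sub_sub_cancel _ _⟩)
  · exact .inr ⟨hm, hm'⟩

end Counting

/-- A representation on `V` of the generalised Witt algebra attached to `φ`, tensored with `B`:
it has elements `X r p b` (`r ∈ G`, `p ∈ P`, `b ∈ B`) and the bracket `lie_X`. The algebra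
`Wₙ ⊗ B` is the case `G = ℤⁿ`, `P = ℂⁿ`; an abelian extension enlarges `P` by vectors on which
every `φ r` vanishes. -/
structure GenWittRep {𝕜 G P : Type*} [Field 𝕜] [AddCommGroup G] [AddCommGroup P] [Module 𝕜 P]
    (φ : G →+ Module.Dual 𝕜 P) (B V : Type*) [CommRing B] [Algebra 𝕜 B] [AddCommGroup V]
    [Module 𝕜 V] where
  X : G → P →ₗ[𝕜] B →ₗ[𝕜] Module.End 𝕜 V
  lie_X : ∀ r p b s q b', ⁅X r p b, X s q b'⁆ = X (r + s) (φ s p • q - φ r q • p) (b * b')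

namespace GenWittRep

open Module

section Basic

variable {𝕜 G P B V : Type*} [Field 𝕜] [AddCommGroup G] [AddCommGroup P] [Module 𝕜 P]
  [CommRing B] [Algebra 𝕜 B] [AddCommGroup V] [Module 𝕜 V] {φ : G →+ Dual 𝕜 P}

lemma apply_ne_zero_of_injective {u : P} (hu : Function.Injective (φ · u)) {r : G} (hr : r ≠ 0) :
    φ r u ≠ 0 :=
  fun h => hr (hu (by simpa using h))

lemma map_ne_zero_of_injective {u : P} (hu : Function.Injective (φ · u)) {r : G} (hr : r ≠ 0) :
    φ r ≠ 0 :=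
  fun h => apply_ne_zero_of_injective hu hr (by rw [h, LinearMap.zero_apply])

variable (M : GenWittRep φ B V)

/-- The weight spaces of the Cartan subalgebra spanned by the `X 0 p 1`. -/
def weightSpace (l : Dual 𝕜 P) : Submodule 𝕜 V := ⨅ p, (M.X 0 p 1).eigenspace (l p)

/-- A submodule of the representation. -/
def IsInvariant (U : Submodule 𝕜 V) : Prop := ∀ r p b, ∀ x ∈ U, M.X r p b x ∈ U

/-- Irreducible representations. -/
structure IsIrreducible : Prop where
  nontrivial : Nontrivial V
  eq_bot_or_eq_top : ∀ U, M.IsInvariant U → U = ⊥ ∨ U = ⊤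

/-- Weight modules all of whose weight spaces have dimension at most `N`. -/
structure IsBoundedWeightModule (N : ℕ) : Prop where
  iSup_weightSpace : ⨆ l, M.weightSpace l = ⊤
  rank_le : ∀ l, Module.rank 𝕜 (M.weightSpace l) ≤ N

variable {M}

lemma X_X_apply (r : G) (p : P) (b : B) (s : G) (q : P) (b' : B) (x : V) :
    M.X r p b (M.X s q b' x) = M.X s q b' (M.X r p b x) +
      M.X (r + s) (φ s p • q - φ r q • p) (b * b') x := by
  rw [← M.lie_X, Ring.lie_def, LinearMap.sub_apply, Module.End.mul_apply, Module.End.mul_apply,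
    add_sub_cancel]

lemma X_zero_X_apply (u : P) (a : B) (r : G) (p : P) (b : B) (x : V) :
    M.X 0 u a (M.X r p b x) = M.X r p b (M.X 0 u a x) + φ r u • M.X r p (a * b) x := by
  rw [X_X_apply, zero_add, map_zero, LinearMap.zero_apply, zero_smul, sub_zero, map_smul,
    LinearMap.smul_apply, LinearMap.smul_apply]

lemma commute_X_zero (p q : P) (a b : B) : Commute (M.X 0 p a) (M.X 0 q b) := by
  rw [commute_iff_lie_eq, M.lie_X]
  simp

lemma mem_weightSpace {l : Dual 𝕜 P} {x : V} :
    x ∈ M.weightSpace l ↔ ∀ p, M.X 0 p 1 x = l p • x := by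
  simp only [weightSpace, Submodule.mem_iInf, End.mem_eigenspace_iff]

lemma X_mem_weightSpace (r : G) (p : P) (b : B) {l : Dual 𝕜 P} {x : V}
    (hx : x ∈ M.weightSpace l) : M.X r p b x ∈ M.weightSpace (l + φ r) := by
  rw [mem_weightSpace] at hx ⊢
  intro q
  rw [X_zero_X_apply, hx, map_smul, one_mul, ← add_smul, LinearMap.add_apply]

lemma X_zero_mem_weightSpace (p : P) (b : B) {l : Dual 𝕜 P} {x : V}
    (hx : x ∈ M.weightSpace l) : M.X 0 p b x ∈ M.weightSpace l := by
  simpa only [map_zero, add_zero] using X_mem_weightSpace 0 p b hx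

lemma X_eq_zero_of_forall_ne_zero [CharZero 𝕜] [Nontrivial G] {u : P}
    (hu : Function.Injective (φ · u)) {b : B} (h : ∀ r ≠ 0, ∀ p, M.X r p b = 0) (r : G) (p : P) :
    M.X r p b = 0 := by
  obtain rfl | hr := eq_or_ne r 0
  · obtain ⟨c, hc⟩ := exists_ne (0 : G)
    refine forall_of_forall_dual_ne_zero (Q := fun p => M.X 0 p b = 0)
      (map_ne_zero_of_injective hu hc) (fun p q hp hq => ?_) (fun p hp => ?_) p
    · rw [map_sub, LinearMap.sub_apply, hp, hq, sub_zero]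
    · have hlie := M.lie_X c p b (-c) p 1
      rw [h c hc, (Commute.zero_left _).lie_eq, add_neg_cancel, map_neg, LinearMap.neg_apply,
        mul_one, ← sub_smul, map_smul, LinearMap.smul_apply, eq_comm, smul_eq_zero] at hlie
      exact hlie.resolve_left fun h0 => hp (by linear_combination (-1 / 2) * h0)
  · exact h r hr p

namespace IsBoundedWeightModule

variable {N : ℕ} (hw : M.IsBoundedWeightModule N)
include hw

lemma finiteDimensional (l : Dual 𝕜 P) : FiniteDimensional 𝕜 (M.weightSpace l) :=
  Module.rank_lt_aleph0_iff.mp ((hw.rank_le l).trans_lt Cardinal.natCast_lt_aleph0)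

lemma finrank_le (l : Dual 𝕜 P) : finrank 𝕜 (M.weightSpace l) ≤ N :=
  finrank_le_of_rank_le (hw.rank_le l)

lemma eq_zero_of_forall_weightSpace {f : End 𝕜 V} (h : ∀ l, ∀ x ∈ M.weightSpace l, f x = 0) :
    f = 0 := by
  rw [← LinearMap.ker_eq_top, eq_top_iff, ← hw.iSup_weightSpace]
  exact iSup_le h

lemma exists_weightSpace_ne_bot [Nontrivial V] : ∃ l, M.weightSpace l ≠ ⊥ := by
  by_contra! h
  exact bot_ne_top (α := Submodule 𝕜 V) (by rw [← hw.iSup_weightSpace, iSup_eq_bot.mpr h])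

end IsBoundedWeightModule

end Basic

section Annihilator

variable {𝕜 G P B V : Type*} [Field 𝕜] [AddCommGroup G] [AddCommGroup P] [Module 𝕜 P]
  [CommRing B] [Algebra 𝕜 B] [AddCommGroup V] [Module 𝕜 V] {φ : G →+ Dual 𝕜 P}
  (M : GenWittRep φ B V)

/-- The largest ideal `I` of `B` such that `X r p I` vanishes on `Y`. -/
def annOn (r : G) (p : P) (Y : Set V) : Ideal B where
  carrier := {b | ∀ a, ∀ y ∈ Y, M.X r p (a * b) y = 0}
  zero_mem' := by simp
  add_mem' hb hc a y hy := by
    rw [mul_add, map_add, LinearMap.add_apply, hb a y hy, hc a y hy, add_zero]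
  smul_mem' c b hb a y hy := by
    rw [smul_eq_mul, ← mul_assoc]; exact hb (a * c) y hy

/-- The largest ideal `I` of `B` such that the action factors through `B ⧸ I`. -/
def ann : Ideal B := ⨅ r, ⨅ p, M.annOn r p Set.univ

variable {M}

lemma mem_annOn {r : G} {p : P} {Y : Set V} {b : B} :
    b ∈ M.annOn r p Y ↔ ∀ a, ∀ y ∈ Y, M.X r p (a * b) y = 0 :=
  Iff.rfl

lemma mem_annOn_singleton {r : G} {p : P} {y : V} {b : B} :
    b ∈ M.annOn r p {y} ↔ ∀ a, M.X r p (a * b) y = 0 := by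
  simp only [mem_annOn, Set.mem_singleton_iff, forall_eq]

lemma mem_ann {b : B} : b ∈ M.ann ↔ ∀ r p a, M.X r p (a * b) = 0 := by
  simp only [ann, Submodule.mem_iInf, mem_annOn, Set.mem_univ, true_imp_iff, LinearMap.ext_iff,
    LinearMap.zero_apply]

lemma annOn_anti (r : G) (p : P) {Y Z : Set V} (h : Y ⊆ Z) : M.annOn r p Z ≤ M.annOn r p Y :=
  fun _ hb a y hy => hb a y (h hy)

lemma mem_annOn_iff_of_stable {r : G} {u : P} (hr : φ r u ≠ 0) (p : P) {Y : Set V}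
    (hY : ∀ a, ∀ y ∈ Y, M.X 0 u a y ∈ Submodule.span 𝕜 Y) {b : B} :
    b ∈ M.annOn r p Y ↔ ∀ y ∈ Y, M.X r p b y = 0 := by
  refine ⟨fun hb y hy => by simpa only [one_mul] using hb 1 y hy, fun hb a y hy => ?_⟩
  have hspan : Submodule.span 𝕜 Y ≤ LinearMap.ker (M.X r p b) := Submodule.span_le.mpr hb
  have hX := X_zero_X_apply u a r p b y (M := M)
  rw [hb y hy, map_zero, LinearMap.mem_ker.mp (hspan (hY a y hy)), zero_add, eq_comm] at hX
  exact (smul_eq_zero_iff_right hr).mp hX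

lemma mem_annOn_weightSpace {r : G} {u : P} (hr : φ r u ≠ 0) {p : P} {l : Dual 𝕜 P} {b : B} :
    b ∈ M.annOn r p (M.weightSpace l) ↔ ∀ y ∈ M.weightSpace l, M.X r p b y = 0 :=
  mem_annOn_iff_of_stable hr p fun a _ hy => Submodule.subset_span (X_zero_mem_weightSpace u a hy)

lemma mem_ann_of_forall_X_eq_zero {b : B} {u : P} (hu : Function.Injective (φ · u))
    [CharZero 𝕜] [Nontrivial G] (h : ∀ r ≠ 0, ∀ p, M.X r p b = 0) : b ∈ M.ann := by
  refine mem_ann.mpr fun r p a => X_eq_zero_of_forall_ne_zero hu (fun s hs q => ?_) r p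
  have hb : b ∈ M.annOn s q Set.univ :=
    (mem_annOn_iff_of_stable (apply_ne_zero_of_injective hu hs) q
      fun _ _ _ => Submodule.subset_span (Set.mem_univ _)).mpr fun y _ => by rw [h s hs q]; rfl
  exact LinearMap.ext fun y => hb a y trivial

lemma exists_injective_quotient_annOn {r : G} {u : P} (hr : φ r u ≠ 0)
    (p : P) (l : Dual 𝕜 P) :
    ∃ g : (B ⧸ M.annOn r p (M.weightSpace l)) →ₗ[𝕜]
      (M.weightSpace l →ₗ[𝕜] M.weightSpace (l + φ r)), Function.Injective g := by
  let Φ : B →ₗ[𝕜] M.weightSpace l →ₗ[𝕜] M.weightSpace (l + φ r) :=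
    LinearMap.mk₂ 𝕜 (fun b y => ⟨M.X r p b y, X_mem_weightSpace r p b y.2⟩)
      (by intros; ext; simp) (by intros; ext; simp) (by intros; ext; simp) (by intros; ext; simp)
  refine exists_injective_quotient_of_ker_eq (Φ := Φ) ?_
  ext b
  rw [LinearMap.mem_ker, Submodule.restrictScalars_mem, mem_annOn_weightSpace hr, LinearMap.ext_iff]
  exact ⟨fun h y hy => congrArg Subtype.val (h ⟨y, hy⟩), fun h y => Subtype.ext (h y y.2)⟩

namespace IsBoundedWeightModule

variable {N : ℕ} (hw : M.IsBoundedWeightModule N)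
include hw

lemma finiteDimensional_quotient_annOn {r : G} {u : P} (hr : φ r u ≠ 0) (p : P) (l : Dual 𝕜 P) :
    FiniteDimensional 𝕜 (B ⧸ M.annOn r p (M.weightSpace l)) := by
  have := hw.finiteDimensional l
  have := hw.finiteDimensional (l + φ r)
  obtain ⟨g, hg⟩ := exists_injective_quotient_annOn (M := M) hr p l
  exact Module.Finite.of_injective g hg

lemma finrank_quotient_annOn_le {r : G} {u : P} (hr : φ r u ≠ 0) (p : P) (l : Dual 𝕜 P) :
    finrank 𝕜 (B ⧸ M.annOn r p (M.weightSpace l)) ≤ N * N := by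
  have := hw.finiteDimensional l
  have := hw.finiteDimensional (l + φ r)
  obtain ⟨g, hg⟩ := exists_injective_quotient_annOn (M := M) hr p l
  calc finrank 𝕜 (B ⧸ M.annOn r p (M.weightSpace l))
      ≤ finrank 𝕜 (M.weightSpace l →ₗ[𝕜] M.weightSpace (l + φ r)) :=
        LinearMap.finrank_le_finrank_of_injective hg
    _ = finrank 𝕜 (M.weightSpace l) * finrank 𝕜 (M.weightSpace (l + φ r)) := finrank_linearMap ..
    _ ≤ N * N := Nat.mul_le_mul (hw.finrank_le _) (hw.finrank_le _)

lemma finiteDimensional_quotient_annOn_singleton {r : G} {u : P} (hr : φ r u ≠ 0) (p : P)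
    {l : Dual 𝕜 P} {x : V} (hx : x ∈ M.weightSpace l) :
    FiniteDimensional 𝕜 (B ⧸ M.annOn r p {x}) :=
  have := hw.finiteDimensional_quotient_annOn hr p l
  finiteDimensional_quotient_of_le (annOn_anti r p (Set.singleton_subset_iff.mpr hx))

end IsBoundedWeightModule

lemma exists_X_ne_zero_of_annOn_le_ker {r : G} {p : P} {Y : Set V}
    [FiniteDimensional 𝕜 (B ⧸ M.annOn r p Y)] {η : B →ₐ[𝕜] 𝕜}
    (h : M.annOn r p Y ≤ RingHom.ker η) :
    ∃ b, ∃ y ∈ Y, M.X r p b y ≠ 0 ∧ ∀ a, M.X r p (a * b) y = η a • M.X r p b y := by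
  obtain ⟨b, hb, hab⟩ := exists_notMem_forall_mul_sub_smul_mem h
  rw [mem_annOn] at hb
  push Not at hb
  obtain ⟨c, y, hy, hne⟩ := hb
  have eigen (a : B) : M.X r p (a * b) y = η a • M.X r p b y := by
    have hmem := hab a 1 y hy
    rwa [one_mul, map_sub, map_smul, LinearMap.sub_apply, LinearMap.smul_apply,
      sub_eq_zero] at hmem
  exact ⟨b, y, hy, fun h0 => hne (by rw [eigen, h0, smul_zero]), eigen⟩

end Annihilator

section Characters

variable {𝕜 G P B V : Type*} [Field 𝕜] [AddCommGroup G] [AddCommGroup P] [Module 𝕜 P]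
  [CommRing B] [Algebra 𝕜 B] [AddCommGroup V] [Module 𝕜 V] {φ : G →+ Dual 𝕜 P}
  (M : GenWittRep φ B V)

/-- The degree `r` part of the Lie algebra, localised at the character `η` of `B`, does not
kill `x`. -/
def IsActiveAt (η : B →ₐ[𝕜] 𝕜) (r : G) (x : V) : Prop :=
  ∃ p, M.annOn r p {x} ≤ RingHom.ker η

variable {M}

lemma not_isActiveAt {η : B →ₐ[𝕜] 𝕜} {r : G} {x : V} :
    ¬ M.IsActiveAt η r x ↔ ∀ p, ∃ e, η e ≠ 0 ∧ ∀ a, M.X r p (a * e) x = 0 := by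
  simp only [IsActiveAt, not_exists, SetLike.not_le_iff_exists, mem_annOn_singleton,
    RingHom.mem_ker]
  exact forall_congr' fun p => exists_congr fun e => and_comm

variable (M) in
/-- The vectors killed by the Lie algebra localised at the character `η` of `B`. -/
def killed (η : B →ₐ[𝕜] 𝕜) : Submodule 𝕜 V where
  carrier := {x | ∀ r, ¬ M.IsActiveAt η r x}
  zero_mem' r := not_isActiveAt.mpr fun p => ⟨1, by simp, by simp⟩
  add_mem' {x y} hx hy r := not_isActiveAt.mpr fun p => by
    obtain ⟨e, he, h⟩ := not_isActiveAt.mp (hx r) p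
    obtain ⟨e', he', h'⟩ := not_isActiveAt.mp (hy r) p
    refine ⟨e * e', by simp [he, he'], fun a => ?_⟩
    rw [map_add, mul_left_comm a, mul_comm e, h, mul_right_comm, h', add_zero]
  smul_mem' c x hx r := not_isActiveAt.mpr fun p => by
    obtain ⟨e, he, h⟩ := not_isActiveAt.mp (hx r) p
    exact ⟨e, he, fun a => by rw [map_smul, h, smul_zero]⟩

lemma mem_killed {η : B →ₐ[𝕜] 𝕜} {x : V} : x ∈ M.killed η ↔ ∀ r, ¬ M.IsActiveAt η r x :=
  Iff.rfl

lemma isInvariant_killed (η : B →ₐ[𝕜] 𝕜) : M.IsInvariant (M.killed η) := by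
  refine fun s q b x hx => mem_killed.mpr fun r => not_isActiveAt.mpr fun p => ?_
  obtain ⟨e, he, h⟩ := not_isActiveAt.mp (hx r) p
  obtain ⟨e', he', h'⟩ := not_isActiveAt.mp (hx (r + s)) (φ s p • q - φ r q • p)
  refine ⟨e * e', by simp [he, he'], fun a => ?_⟩
  rw [X_X_apply, show a * (e * e') * b = a * e * b * e' by ring, h',
    show a * (e * e') = a * e' * e by ring, h, map_zero, zero_add]

lemma IsActiveAt.of_add {u : P} (hu : Function.Injective (φ · u)) {η : B →ₐ[𝕜] 𝕜} {r s : G}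
    (hrs : r ≠ s) {x : V} (h : M.IsActiveAt η (r + s) x) :
    M.IsActiveAt η r x ∨ M.IsActiveAt η s x := by
  contrapose! h
  obtain ⟨hr, hs⟩ := h
  rw [not_isActiveAt] at hr hs ⊢
  refine forall_of_forall_dual_ne_zero (f := φ (s - r))
    (map_ne_zero_of_injective hu (sub_ne_zero.mpr hrs.symm)) ?_ fun p hp => ?_
  · rintro p q ⟨e, he, hp⟩ ⟨e', he', hq⟩
    refine ⟨e * e', by simp [he, he'], fun a => ?_⟩
    rw [map_sub, LinearMap.sub_apply, LinearMap.sub_apply, mul_left_comm a, mul_comm e, hp,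
      mul_right_comm, hq, sub_zero]
  · obtain ⟨e, he, hr⟩ := hr p
    obtain ⟨e', he', hs⟩ := hs p
    refine ⟨e * e', by simp [he, he'], fun a => ?_⟩
    have hX := M.X_X_apply r p (a * e) s p (1 * e') x
    rw [hr, hs, map_zero, map_zero, zero_add, ← sub_smul, map_smul, LinearMap.smul_apply,
      LinearMap.smul_apply, eq_comm, smul_eq_zero, ← LinearMap.sub_apply, ← map_sub] at hX
    simpa only [one_mul, mul_assoc] using hX.resolve_left hp

variable (M) in
/-- The nonzero degrees in which the Lie algebra, localised at `η`, moves `x`. -/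
def activeDegrees (η : B →ₐ[𝕜] 𝕜) (x : V) : Set G := {r | r ≠ 0 ∧ M.IsActiveAt η r x}

lemma exists_finite_notMem_activeDegrees [IsAddTorsionFree G] {u : P}
    (hu : Function.Injective (φ · u)) {η : B →ₐ[𝕜] 𝕜} (hη : M.killed η = ⊥) {x : V} (hx : x ≠ 0) :
    ∃ ρ, {m | m ∉ M.activeDegrees η x ∧ ρ - m ∉ M.activeDegrees η x}.Finite := by
  have hxη : x ∉ M.killed η := by rwa [hη, Submodule.mem_bot]
  rw [mem_killed] at hxη
  push Not at hxη
  obtain ⟨ρ, hρ⟩ := hxη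
  have hhalf : {m : G | 2 • m = ρ}.Subsingleton := fun m hm m' hm' =>
    nsmul_right_injective two_ne_zero (hm.trans hm'.symm)
  refine ⟨ρ, ((Set.toFinite {0, ρ}).union hhalf.finite).subset ?_⟩
  rintro m ⟨hm, hρm⟩
  by_cases h0 : m = 0 ∨ m = ρ
  · exact .inl h0
  refine .inr ?_
  push Not at h0
  by_contra hne
  obtain h | h := IsActiveAt.of_add hu (r := m) (s := ρ - m)
    (fun h => hne (by rw [Set.mem_ofPred_eq, two_nsmul, ← eq_sub_iff_add_eq, ← h]))
    (by rwa [add_sub_cancel])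
  · exact hm ⟨h0.1, h⟩
  · exact hρm ⟨sub_ne_zero.mpr h0.2.symm, h⟩

variable (M) in
/-- The joint eigenvectors of the `X 0 u a` with eigenvalues `χ a`, within a weight space. -/
def jointEigenspace (u : P) (l : Dual 𝕜 P) (χ : B → 𝕜) : Submodule 𝕜 V :=
  M.weightSpace l ⊓ ⨅ a, (M.X 0 u a).eigenspace (χ a)

lemma mem_jointEigenspace {u : P} {l : Dual 𝕜 P} {χ : B → 𝕜} {x : V} :
    x ∈ M.jointEigenspace u l χ ↔ x ∈ M.weightSpace l ∧ ∀ a, M.X 0 u a x = χ a • x := by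
  simp only [jointEigenspace, Submodule.mem_inf, Submodule.mem_iInf, End.mem_eigenspace_iff]

namespace IsBoundedWeightModule

variable {N : ℕ} (hw : M.IsBoundedWeightModule N)
include hw

lemma exists_mem_jointEigenspace_ne_zero [IsAlgClosed 𝕜] [Nontrivial V] (u : P) :
    ∃ l χ, ∃ x ∈ M.jointEigenspace u l χ, x ≠ 0 := by
  obtain ⟨l, hl⟩ := hw.exists_weightSpace_ne_bot
  have := hw.finiteDimensional l
  obtain ⟨x, hx, hx0, χ, hχ⟩ := exists_common_eigenvector_of_commute
    (fun a b => commute_X_zero (M := M) u u a b) (M.weightSpace l) hl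
    fun a x hx => X_zero_mem_weightSpace u a hx
  exact ⟨l, χ, x, mem_jointEigenspace.mpr ⟨hx, hχ⟩, hx0⟩

lemma exists_mem_jointEigenspace_of_mem_activeDegrees {u : P} (hu : Function.Injective (φ · u))
    {η : B →ₐ[𝕜] 𝕜} {l : Dual 𝕜 P} {χ : B → 𝕜} {x : V} (hx : x ∈ M.jointEigenspace u l χ) {r : G}
    (hr : r ∈ M.activeDegrees η x) :
    ∃ y ∈ M.jointEigenspace u (l + φ r) (fun a => χ a + φ r u * η a), y ≠ 0 := by
  obtain ⟨hr0, p, hp⟩ := hr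
  obtain ⟨hxl, hχ⟩ := mem_jointEigenspace.mp hx
  have := hw.finiteDimensional_quotient_annOn_singleton (apply_ne_zero_of_injective hu hr0) p hxl
  obtain ⟨b, y, rfl, hy0, hb⟩ := exists_X_ne_zero_of_annOn_le_ker hp
  refine ⟨_, mem_jointEigenspace.mpr ⟨X_mem_weightSpace r p b hxl, fun a => ?_⟩, hy0⟩
  rw [X_zero_X_apply, hχ, map_smul, hb, smul_smul, add_smul]

lemma exists_killed_ne_top_of_annOn_le [IsAlgClosed 𝕜] {r : G} {u : P} (hr : φ r u ≠ 0) {p : P}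
    {l : Dual 𝕜 P} {J : Ideal B} [J.IsPrime] (hJ : M.annOn r p (M.weightSpace l) ≤ J) :
    ∃ η : B →ₐ[𝕜] 𝕜, RingHom.ker η = J ∧ M.killed η ≠ ⊤ := by
  have := hw.finiteDimensional_quotient_annOn hr p l
  have := finiteDimensional_quotient_of_le (𝕜 := 𝕜) hJ
  obtain ⟨η, rfl⟩ := exists_algHom_ker_eq (𝕜 := 𝕜) (J := J)
  refine ⟨η, rfl, fun htop => ?_⟩
  obtain ⟨b, y, -, hy0, hb⟩ := exists_X_ne_zero_of_annOn_le_ker hJ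
  obtain ⟨e, he, hey⟩ :=
    not_isActiveAt.mp (mem_killed.mp (htop ▸ Submodule.mem_top : y ∈ M.killed η) r) p
  have hzero := hb e
  rw [mul_comm, hey, eq_comm, smul_eq_zero] at hzero
  exact hzero.elim he hy0

lemma exists_killed_ne_top [IsAlgClosed 𝕜] [CharZero 𝕜] [Nontrivial G] {u : P}
    (hu : Function.Injective (φ · u)) (hnt : ∃ r p b, M.X r p b ≠ 0) :
    ∃ η : B →ₐ[𝕜] 𝕜, M.killed η ≠ ⊤ := by
  by_contra! htop
  obtain ⟨r, p, b, hX⟩ := hnt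
  refine hX (X_eq_zero_of_forall_ne_zero hu (fun r hr p => ?_) r p)
  have hru := apply_ne_zero_of_injective hu hr
  refine hw.eq_zero_of_forall_weightSpace fun l => (mem_annOn_weightSpace hru).mp ?_
  by_contra hb
  obtain ⟨J, hJ, hle⟩ := Ideal.exists_le_maximal (M.annOn r p (M.weightSpace l))
    fun h => hb (h ▸ Submodule.mem_top)
  have := hJ.isPrime
  obtain ⟨η, -, hη⟩ := hw.exists_killed_ne_top_of_annOn_le hru hle
  exact hη (htop η)

end IsBoundedWeightModule

end Characters

section UniqueCharacter

variable {𝕜 ι P B V : Type*} [Field 𝕜] [Finite ι] [Nonempty ι] [AddCommGroup P] [Module 𝕜 P]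
  [CommRing B] [Algebra 𝕜 B] [AddCommGroup V] [Module 𝕜 V] {φ : (ι → ℤ) →+ Dual 𝕜 P}
  {M : GenWittRep φ B V}

lemma exists_common_activeDegree {u : P} (hu : Function.Injective (φ · u)) {η : B →ₐ[𝕜] 𝕜}
    (hη : M.killed η = ⊥) {N : ℕ} {K : Finset (ι → ℤ)} (hK : 4 * N * 2 ^ Nat.card ι < K.card)
    {y : (ι → ℤ) → V} (hy : ∀ k ∈ K, y k ≠ 0) :
    ∃ m, ∃ K' ⊆ K, N < K'.card ∧ ∀ k ∈ K', m - k ∈ M.activeDegrees η (y k) := by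
  have := Fintype.ofFinite ι
  rw [Nat.card_eq_fintype_card] at hK
  choose! ρ hρ using fun k hk => exists_finite_notMem_activeDegrees hu hη (hy k hk)
  refine exists_lt_card_forall_mem_of_finite K hK
    (fun k => {m | m - k ∈ M.activeDegrees η (y k)}) (fun k => ρ k + k + k) fun k hk => ?_
  convert (hρ k hk).preimage (sub_left_injective (b := k)).injOn using 1
  ext m
  have hshift : ρ k + k + k - m - k = ρ k - (m - k) := by abel
  simp only [Set.mem_ofPred_eq, Set.mem_preimage, hshift]

lemma IsBoundedWeightModule.eq_of_killed_eq_bot [IsAlgClosed 𝕜] [Nontrivial V] {N : ℕ}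
    (hw : M.IsBoundedWeightModule N) {u : P} (hu : Function.Injective (φ · u))
    {η₁ η₂ : B →ₐ[𝕜] 𝕜} (h₁ : M.killed η₁ = ⊥) (h₂ : M.killed η₂ = ⊥) : η₁ = η₂ := by
  by_contra hne
  -- Moving `x` to degree `m` by `k` at `η₁` and `m - k` at `η₂` gives independent eigenvectors.
  obtain ⟨a, ha₁, ha₂⟩ : ∃ a, η₁ a = 1 ∧ η₂ a = 0 := by
    obtain ⟨b, hb⟩ := DFunLike.ne_iff.mp hne
    exact ⟨(η₁ b - η₂ b)⁻¹ • (b - algebraMap 𝕜 B (η₂ b)), by simp [sub_ne_zero.mpr hb], by simp⟩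
  obtain ⟨l, χ, x, hx, hx0⟩ := hw.exists_mem_jointEigenspace_ne_zero u
  obtain ⟨ρ, hρ⟩ := exists_finite_notMem_activeDegrees hu h₁ hx0
  obtain ⟨K, hK, hcard⟩ := (infinite_of_finite_notMem_and_sub_notMem hρ).exists_subset_card_eq
    (4 * N * 2 ^ Nat.card ι + 1)
  choose! y hy hy0 using fun k (hk : k ∈ K) =>
    hw.exists_mem_jointEigenspace_of_mem_activeDegrees hu hx (hK hk)
  obtain ⟨m, K', hK', hlt, hm⟩ := exists_common_activeDegree hu h₂ (N := N) (by omega) hy0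
  have := hw.finiteDimensional (l + φ m)
  have hle : K'.card ≤ finrank 𝕜 (M.weightSpace (l + φ m)) := by
    refine card_le_finrank_of_eigenvectors (f := M.X 0 u a) K' (μ := fun k => χ a + φ k u)
      (fun k _ k' _ h => hu (add_left_cancel h)) fun k hk => ?_
    obtain ⟨z, hz, hz0⟩ :=
      hw.exists_mem_jointEigenspace_of_mem_activeDegrees hu (hy k (hK' hk)) (hm k hk)
    obtain ⟨hzm, hza⟩ := mem_jointEigenspace.mp hz
    rw [add_assoc, ← map_add, add_sub_cancel] at hzm
    exact ⟨z, hzm, hz0, by rw [hza, ha₁, ha₂, mul_one, mul_zero, add_zero]⟩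
  exact (hle.trans (hw.finrank_le _)).not_gt hlt

lemma IsBoundedWeightModule.pow_mem_annOn_weightSpace [IsAlgClosed 𝕜]
    {N : ℕ} (hw : M.IsBoundedWeightModule N) (hirr : M.IsIrreducible) {u : P}
    (hu : Function.Injective (φ · u)) {η : B →ₐ[𝕜] 𝕜} (hη : M.killed η = ⊥) {a : B}
    (ha : a ∈ RingHom.ker η) {r : ι → ℤ} (hr : r ≠ 0) (p : P) (l : Dual 𝕜 P) :
    a ^ (N * N) ∈ M.annOn r p (M.weightSpace l) := by
  have := hirr.nontrivial
  have hru := apply_ne_zero_of_injective hu hr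
  have := hw.finiteDimensional_quotient_annOn hru p l
  refine pow_mem_of_mem_radical_of_finrank_le (hw.finrank_quotient_annOn_le hru p l) ?_
  rw [Ideal.radical_eq_sInf, Submodule.mem_sInf]
  rintro J ⟨hJ, hJprime⟩
  obtain ⟨η', rfl, hη'⟩ := hw.exists_killed_ne_top_of_annOn_le hru hJ
  have hbot := (hirr.eq_bot_or_eq_top _ (isInvariant_killed η')).resolve_right hη'
  rwa [← hw.eq_of_killed_eq_bot hu hη hbot]

end UniqueCharacter

section AbelianIdeal

variable {𝕜 G P B V : Type*} [Field 𝕜] [AddCommGroup G] [AddCommGroup P] [Module 𝕜 P]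
  [CommRing B] [Algebra 𝕜 B] [AddCommGroup V] [Module 𝕜 V] {φ : G →+ Dual 𝕜 P}
  {M : GenWittRep φ B V} {S : Set (End 𝕜 V)}

variable (M S) in
/-- A set of pairwise commuting operators that is stable under bracketing with the Lie algebra,
such as the image of an abelian ideal. -/
structure IsAbelianIdeal : Prop where
  commute : ∀ x ∈ S, ∀ y ∈ S, Commute x y
  lie_mem : ∀ r p b, ∀ x ∈ S, ⁅M.X r p b, x⁆ ∈ S

namespace IsAbelianIdeal

lemma adjoin (hS : M.IsAbelianIdeal S) :
    M.IsAbelianIdeal (Algebra.adjoin 𝕜 S : Set (End 𝕜 V)) where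
  commute _ hx _ hy := Algebra.commute_of_mem_adjoin_of_forall_mem_commute hy fun y hy =>
    (Algebra.commute_of_mem_adjoin_of_forall_mem_commute hx fun x hx => hS.commute y hy x hx).symm
  lie_mem r p b _ hx :=
    lie_mem_adjoin (fun y hy => Algebra.subset_adjoin (hS.lie_mem r p b y hy)) hx

lemma commute_lie (hS : M.IsAbelianIdeal S) (r : G) (p : P) (b : B) {x : End 𝕜 V} (hx : x ∈ S) :
    Commute x ⁅M.X r p b, x⁆ :=
  hS.commute x hx _ (hS.lie_mem r p b x hx)

lemma eq_zero_of_forall_apply_eq_zero (hS : M.IsAbelianIdeal S) (hirr : M.IsIrreducible) {v : V}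
    (hv : v ≠ 0) (h : ∀ x ∈ S, x v = 0) {x : End 𝕜 V} (hx : x ∈ S) : x = 0 := by
  let K : Submodule 𝕜 V := ⨅ x : S, LinearMap.ker x.1
  have mem_K (y : V) : y ∈ K ↔ ∀ x ∈ S, x y = 0 := by
    simp only [K, Submodule.mem_iInf, LinearMap.mem_ker, Subtype.forall]
  have hK : M.IsInvariant K := fun r p b y hy => (mem_K _).mpr fun x hx => by
    have hlie := (mem_K y).mp hy _ (hS.lie_mem r p b x hx)
    rw [Ring.lie_def, LinearMap.sub_apply, End.mul_apply, End.mul_apply, (mem_K y).mp hy x hx,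
      map_zero, zero_sub, neg_eq_zero] at hlie
    exact hlie
  have htop : K = ⊤ := (hirr.eq_bot_or_eq_top K hK).resolve_left fun hbot =>
    hv ((Submodule.mem_bot 𝕜).mp (hbot ▸ (mem_K v).mpr h))
  exact LinearMap.ext fun y => (mem_K y).mp (htop ▸ Submodule.mem_top) x hx

lemma isNilpotent_lie [CharZero 𝕜] (hS : M.IsAbelianIdeal S) (r : G) (p : P) (b : B)
    {x : End 𝕜 V} (hx : x ∈ S) (hnil : IsNilpotent x) : IsNilpotent ⁅M.X r p b, x⁆ :=
  have : IsAddTorsionFree (End 𝕜 V) := .of_isTorsionFree 𝕜 _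
  _root_.isNilpotent_lie hnil (hS.commute_lie r p b hx)
    (hS.commute_lie r p b (hS.lie_mem r p b x hx))

variable {N : ℕ}

lemma exists_isNilpotent_sub_algebraMap [IsAlgClosed 𝕜] (hS : M.IsAbelianIdeal S)
    (hw : M.IsBoundedWeightModule N) (hirr : M.IsIrreducible) {T : End 𝕜 V} (hT : T ∈ S)
    (hTw : ∀ l, ∀ x ∈ M.weightSpace l, T x ∈ M.weightSpace l) :
    ∃ c, IsNilpotent (T - algebraMap 𝕜 (End 𝕜 V) c) := by
  have := hirr.nontrivial
  obtain ⟨l, hl⟩ := hw.exists_weightSpace_ne_bot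
  have := hw.finiteDimensional l
  obtain ⟨c, x, -, hx0, hx⟩ := exists_mem_eigenspace_ne_zero hl (hTw l)
  have htop : T.maxGenEigenspace c = ⊤ :=
    (hirr.eq_bot_or_eq_top (T.maxGenEigenspace c) fun r p b y hy =>
      mem_maxGenEigenspace_of_commute_lie (hS.commute_lie r p b hT) hy).resolve_left fun hbot =>
        hx0 ((Submodule.mem_bot 𝕜).mp (hbot ▸ (T.genEigenspace c).mono le_top hx))
  refine ⟨c, N, hw.eq_zero_of_forall_weightSpace fun m y hy => ?_⟩
  have := hw.finiteDimensional m
  obtain ⟨k, hk⟩ := (End.mem_maxGenEigenspace T c y).mp (htop ▸ Submodule.mem_top)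
  rw [Algebra.algebraMap_eq_smul_one]
  exact pow_apply_eq_zero_of_finrank_le
    (fun z hz => sub_mem (hTw m z hz) (Submodule.smul_mem _ c hz)) (hw.finrank_le m) hy hk

lemma isNilpotent_lie_of_forall_weightSpace [IsAlgClosed 𝕜] [CharZero 𝕜] (hS : M.IsAbelianIdeal S)
    (hw : M.IsBoundedWeightModule N) (hirr : M.IsIrreducible) {T : End 𝕜 V} (hT : T ∈ S)
    (hTw : ∀ l, ∀ x ∈ M.weightSpace l, T x ∈ M.weightSpace l) (r : G) (p : P) (b : B) :
    IsNilpotent ⁅M.X r p b, T⁆ := by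
  obtain ⟨c, hc⟩ := hS.exists_isNilpotent_sub_algebraMap hw hirr hT hTw
  rw [← lie_sub_algebraMap _ T c]
  exact hS.adjoin.isNilpotent_lie r p b
    (sub_mem (Algebra.subset_adjoin hT) (Subalgebra.algebraMap_mem _ c)) hc

lemma exists_apply_ne_zero_forall_lie_apply_eq_zero [CharZero 𝕜] (hS : M.IsAbelianIdeal S)
    (hw : M.IsBoundedWeightModule N) [Nontrivial V] {x : End 𝕜 V} (hx : x ∈ S)
    (hnil : IsNilpotent x) : ∃ k l, ∃ v ∈ M.weightSpace l, (x ^ k) v ≠ 0 ∧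
      ∀ r p b, ⁅M.X r p b, x⁆ ((x ^ k) v) = 0 := by
  have : IsAddTorsionFree (End 𝕜 V) := .of_isTorsionFree 𝕜 _
  obtain ⟨k, hk, hlie⟩ := exists_pow_ne_zero_forall_lie_mul_eq_zero hnil
  obtain ⟨l, v, hv, hne⟩ : ∃ l, ∃ v ∈ M.weightSpace l, (x ^ k) v ≠ 0 := by
    by_contra! h
    exact hk (hw.eq_zero_of_forall_weightSpace h)
  exact ⟨k, l, v, hv, hne, fun r p b =>
    LinearMap.congr_fun (hlie _ (hS.commute_lie r p b hx)) v⟩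

end IsAbelianIdeal

end AbelianIdeal

section Radical

variable {𝕜 G P B V : Type*} [Field 𝕜] [AddCommGroup G] [AddCommGroup P] [Module 𝕜 P]
  [CommRing B] [Algebra 𝕜 B] [AddCommGroup V] [Module 𝕜 V] {φ : G →+ Dual 𝕜 P}
  {M : GenWittRep φ B V}

variable (M) in
/-- The image of the ideal of the Lie algebra generated by the ideal `(a)` of `B`. -/
def multiples (a : B) : Set (End 𝕜 V) := {x | ∃ r p b, x = M.X r p (b * a)}

lemma X_mul_mem_multiples (r : G) (p : P) (b a : B) : M.X r p (b * a) ∈ M.multiples a :=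
  ⟨r, p, b, rfl⟩

lemma X_mem_multiples (r : G) (p : P) (a : B) : M.X r p a ∈ M.multiples a :=
  ⟨r, p, 1, by rw [one_mul]⟩

lemma isAbelianIdeal_multiples {a : B} (ha : a * a ∈ M.ann) : M.IsAbelianIdeal (M.multiples a) where
  commute := by
    rintro _ ⟨r, p, b, rfl⟩ _ ⟨s, q, c, rfl⟩
    rw [commute_iff_lie_eq, M.lie_X, mul_mul_mul_comm, mem_ann.mp ha]
  lie_mem := by
    rintro r p b _ ⟨s, q, c, rfl⟩
    rw [M.lie_X, ← mul_assoc]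
    exact X_mul_mem_multiples ..

variable [CharZero 𝕜] [IsAlgClosed 𝕜] {N : ℕ} (hw : M.IsBoundedWeightModule N)
  (hirr : M.IsIrreducible) {u : P} (hu : Function.Injective (φ · u))
include hw hirr hu

lemma isNilpotent_X_of_ne_zero {a : B} (ha : a * a ∈ M.ann) {r : G} (hr : r ≠ 0) (p : P) (b : B) :
    IsNilpotent (M.X r p (b * a)) := by
  have hlie := (isAbelianIdeal_multiples ha).isNilpotent_lie_of_forall_weightSpace hw hirr
    (X_mem_multiples 0 u a) (fun _ _ => X_zero_mem_weightSpace u a) r p b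
  rw [M.lie_X, add_zero, map_zero, LinearMap.zero_apply, zero_smul, zero_sub, ← neg_smul, map_smul,
    LinearMap.smul_apply] at hlie
  exact isNilpotent_of_smul (neg_ne_zero.mpr (apply_ne_zero_of_injective hu hr)) hlie

lemma isNilpotent_X [Nontrivial G] {a : B} (ha : a * a ∈ M.ann) (r : G) (p : P) (b : B) :
    IsNilpotent (M.X r p (b * a)) := by
  have hS := isAbelianIdeal_multiples ha
  obtain rfl | hr := eq_or_ne r 0
  · obtain ⟨c, hc⟩ := exists_ne (0 : G)
    refine forall_of_forall_dual_ne_zero (Q := fun p => IsNilpotent (M.X 0 p (b * a)))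
      (map_ne_zero_of_injective hu hc) (fun p q hp hq => ?_) (fun p hp => ?_) p
    · rw [map_sub, LinearMap.sub_apply]
      exact (hS.commute _ (X_mul_mem_multiples ..) _ (X_mul_mem_multiples ..)).isNilpotent_sub hp hq
    · have hlie := hS.isNilpotent_lie c p 1 (X_mul_mem_multiples (-c) p b a)
        (isNilpotent_X_of_ne_zero hw hirr hu ha (neg_ne_zero.mpr hc) p b)
      rw [M.lie_X, add_neg_cancel, map_neg, LinearMap.neg_apply, one_mul, ← sub_smul, map_smul,
        LinearMap.smul_apply] at hlie
      exact isNilpotent_of_smul (fun h0 => hp (by linear_combination (-1 / 2) * h0)) hlie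
  · exact isNilpotent_X_of_ne_zero hw hirr hu ha hr p b

lemma exists_ne_zero_forall_mem_multiples_apply_eq_zero [Nontrivial G] {a : B}
    (ha : a * a ∈ M.ann) :
    ∃ v ≠ 0, ∀ x ∈ M.multiples a, x v = 0 := by
  have := hirr.nontrivial
  have hS := isAbelianIdeal_multiples ha
  let K : Submodule 𝕜 V := ⨅ y : {y : G × P × B // y.1 ≠ 0},
    LinearMap.ker (M.X y.1.1 y.1.2.1 (y.1.2.2 * a))
  have mem_K (x : V) : x ∈ K ↔ ∀ r ≠ 0, ∀ p b, M.X r p (b * a) x = 0 := by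
    simp only [K, Submodule.mem_iInf, LinearMap.mem_ker, Subtype.forall, Prod.forall]
    exact ⟨fun h r hr p b => h r p b hr, fun h r p b hr => h r hr p b⟩
  obtain ⟨k, l, v, hv, hne, hkill⟩ := hS.exists_apply_ne_zero_forall_lie_apply_eq_zero hw
    (X_mem_multiples 0 u a) (by simpa using isNilpotent_X hw hirr hu ha 0 u 1)
  have hvK : (M.X 0 u a ^ k) v ∈ K := (mem_K _).mpr fun r hr p b => by
    have hlie := hkill r p b
    rw [M.lie_X, add_zero, map_zero, LinearMap.zero_apply, zero_smul, zero_sub, ← neg_smul,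
      map_smul, LinearMap.smul_apply, LinearMap.smul_apply, smul_eq_zero] at hlie
    exact hlie.resolve_left (neg_ne_zero.mpr (apply_ne_zero_of_injective hu hr))
  have hvl : (M.X 0 u a ^ k) v ∈ M.weightSpace l :=
    Module.End.pow_apply_mem_of_forall_mem k (fun _ => X_zero_mem_weightSpace u a) v hv
  have := hw.finiteDimensional l
  have : FiniteDimensional 𝕜 ↥(K ⊓ M.weightSpace l) :=
    Submodule.finiteDimensional_of_le inf_le_right
  obtain ⟨x, hx, hx0, hzero⟩ := exists_mem_ne_zero_forall_apply_eq_zero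
    (f := fun y : P × B => M.X 0 y.1 (y.2 * a)) (fun _ _ => commute_X_zero ..)
    (fun y => isNilpotent_X hw hirr hu ha 0 y.1 y.2) (K ⊓ M.weightSpace l)
    ((Submodule.ne_bot_iff _).mpr ⟨_, ⟨hvK, hvl⟩, hne⟩) fun y x hx =>
      ⟨(mem_K _).mpr fun r hr p b => by
        rw [← End.mul_apply, (hS.commute _ (X_mul_mem_multiples ..) _ (X_mul_mem_multiples ..)).eq,
          End.mul_apply, (mem_K x).mp hx.1 r hr, map_zero], X_zero_mem_weightSpace y.1 _ hx.2⟩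
  refine ⟨x, hx0, ?_⟩
  rintro _ ⟨r, p, b, rfl⟩
  obtain rfl | hr := eq_or_ne r 0
  · exact hzero (p, b)
  · exact (mem_K x).mp hx.1 r hr p b

lemma isRadical_ann [Nontrivial G] : M.ann.IsRadical := by
  refine (Ideal.isRadical_iff_pow_one_lt 2 one_lt_two).mpr fun a ha => mem_ann.mpr fun r p b => ?_
  rw [pow_two] at ha
  obtain ⟨v, hv, h⟩ := exists_ne_zero_forall_mem_multiples_apply_eq_zero hw hirr hu ha
  exact (isAbelianIdeal_multiples ha).eq_zero_of_forall_apply_eq_zero hirr hv h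
    (X_mul_mem_multiples r p b a)

end Radical

section CentralElements

variable {𝕜 G P B V : Type*} [Field 𝕜] [AddCommGroup G] [AddCommGroup P] [Module 𝕜 P]
  [CommRing B] [Algebra 𝕜 B] [AddCommGroup V] [Module 𝕜 V] {φ : G →+ Dual 𝕜 P}
  {M : GenWittRep φ B V}

lemma X_zero_eq_algebraMap (hirr : M.IsIrreducible) {s : P} (hs : ∀ r, φ r s = 0) {l : Dual 𝕜 P}
    (hl : M.weightSpace l ≠ ⊥) : M.X 0 s 1 = algebraMap 𝕜 (End 𝕜 V) (l s) := by
  have hinv : M.IsInvariant ((M.X 0 s 1).eigenspace (l s)) := fun r p b x hx => by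
    rw [End.mem_eigenspace_iff] at hx ⊢
    rw [X_zero_X_apply, hs, zero_smul, add_zero, hx, map_smul]
  have htop := (hirr.eq_bot_or_eq_top _ hinv).resolve_left fun hbot =>
    hl (eq_bot_iff.mpr (hbot ▸ iInf_le _ s))
  exact LinearMap.ext fun x => End.mem_eigenspace_iff.mp (htop ▸ Submodule.mem_top)

variable (M) in
/-- The image of the abelian ideal `s ⊗ 𝕜[G] ⊗ B` spanned by a central direction `s`. -/
def centralOps (s : P) : Set (End 𝕜 V) := {x | ∃ m b, x = M.X m s b}

lemma lie_X_of_central {s : P} (hs : ∀ r, φ r s = 0) (r : G) (p : P) (b : B) (m : G) (c : B) :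
    ⁅M.X r p b, M.X m s c⁆ = φ m p • M.X (r + m) s (b * c) := by
  rw [M.lie_X, hs, zero_smul, sub_zero, map_smul, LinearMap.smul_apply]

lemma isAbelianIdeal_centralOps {s : P} (hs : ∀ r, φ r s = 0) :
    M.IsAbelianIdeal (M.centralOps s) where
  commute := by
    rintro _ ⟨m, b, rfl⟩ _ ⟨k, c, rfl⟩
    rw [commute_iff_lie_eq, lie_X_of_central hs, hs, zero_smul]
  lie_mem := by
    rintro r p b _ ⟨m, c, rfl⟩
    exact ⟨r + m, φ m p • (b * c), by rw [lie_X_of_central hs, map_smul]⟩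

variable [CharZero 𝕜] [IsAlgClosed 𝕜] {N : ℕ} (hw : M.IsBoundedWeightModule N)
  (hirr : M.IsIrreducible) {u : P} (hu : Function.Injective (φ · u)) {s : P} (hs : ∀ r, φ r s = 0)
include hw hirr hu hs

lemma isNilpotent_X_add_mul_X_neg_sub {m : G} (hm : m ≠ 0) (r : G) :
    IsNilpotent (M.X (r + m) s 1 * M.X (-m) s 1 - M.X m s 1 * M.X (r - m) s 1) := by
  have hmem (k : G) : M.X k s 1 ∈ Algebra.adjoin 𝕜 (M.centralOps s) :=
    Algebra.subset_adjoin ⟨k, 1, rfl⟩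
  have hlie := (isAbelianIdeal_centralOps hs).adjoin.isNilpotent_lie_of_forall_weightSpace hw hirr
    (mul_mem (hmem m) (hmem (-m))) (fun l x hx => by
      simpa using X_mem_weightSpace m s 1 (X_mem_weightSpace (-m) s 1 hx)) r u 1
  rw [lie_mul_eq, lie_X_of_central hs, lie_X_of_central hs, mul_one, map_neg, LinearMap.neg_apply,
    smul_mul_assoc, mul_smul_comm, neg_smul, ← sub_eq_add_neg, ← smul_sub, ← sub_eq_add_neg] at hlie
  exact isNilpotent_of_smul (apply_ne_zero_of_injective hu hm) hlie

open scoped IsMulCommutative in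
lemma exists_isNilpotent_X_of_central [Nontrivial G] [IsAddTorsionFree G] (hs0 : M.X 0 s 1 = 0) :
    ∃ m ≠ 0, IsNilpotent (M.X m s 1) := by
  have hS := (isAbelianIdeal_centralOps (M := M) hs).adjoin
  let C := Algebra.adjoin 𝕜 (M.centralOps s)
  have : IsMulCommutative C := ⟨⟨fun x y => Subtype.ext (hS.commute x x.2 y y.2)⟩⟩
  let E (k : G) : C := ⟨M.X k s 1, Algebra.subset_adjoin ⟨k, 1, rfl⟩⟩
  have isNilpotent_val (x : C) : IsNilpotent (x : End 𝕜 V) ↔ IsNilpotent x :=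
    IsNilpotent.map_iff (f := C.val) Subtype.val_injective
  obtain ⟨m, hm⟩ := exists_ne (0 : G)
  obtain ⟨c, hc⟩ := hS.exists_isNilpotent_sub_algebraMap hw hirr (E m * E (-m)).2 fun l x hx => by
    simpa using X_mem_weightSpace m s 1 (X_mem_weightSpace (-m) s 1 hx)
  have hsub (r : G) : IsNilpotent (E (r + m) * E (-m) - E m * E (r - m)) :=
    (isNilpotent_val _).mp (isNilpotent_X_add_mul_X_neg_sub hw hirr hu hs hm r)
  have hzy : IsNilpotent (E (m + m + m) * E (-m) - E m * E m) := by
    have h := hsub (m + m)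
    rwa [add_sub_cancel_right] at h
  have hxw : IsNilpotent (E m * E (-m - m)) := by
    have h := hsub (-m)
    rwa [neg_add_cancel, show E 0 = 0 from Subtype.ext hs0, zero_mul, zero_sub,
      isNilpotent_neg_iff] at h
  obtain h | h := isNilpotent_or_isNilpotent_of_sub
    ((isNilpotent_val (E m * E (-m) - algebraMap 𝕜 C c)).mp hc) hzy hxw
  · exact ⟨m, hm, (isNilpotent_val _).mpr h⟩
  · refine ⟨-m - m, fun h0 => hm ?_, (isNilpotent_val _).mpr h⟩
    rw [← neg_add', neg_eq_zero, ← two_nsmul] at h0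
    exact (nsmul_eq_zero_iff_right two_ne_zero).mp h0

lemma X_eq_zero_of_central [Nontrivial G] [IsAddTorsionFree G] (hs0 : M.X 0 s 1 = 0) (m : G)
    (b : B) : M.X m s b = 0 := by
  have := hirr.nontrivial
  have hS := isAbelianIdeal_centralOps (M := M) hs
  obtain ⟨j, hj, hnil⟩ := exists_isNilpotent_X_of_central hw hirr hu hs hs0
  obtain ⟨k, -, v, -, hne, hkill⟩ :=
    hS.exists_apply_ne_zero_forall_lie_apply_eq_zero hw ⟨j, 1, rfl⟩ hnil
  refine hS.eq_zero_of_forall_apply_eq_zero hirr hne ?_ ⟨m, b, rfl⟩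
  rintro _ ⟨i, c, rfl⟩
  have hlie := hkill (i - j) u c
  rw [lie_X_of_central hs, sub_add_cancel, mul_one, LinearMap.smul_apply, smul_eq_zero] at hlie
  exact hlie.resolve_left (apply_ne_zero_of_injective hu hj)

end CentralElements

section Evaluation

variable {𝕜 ι P B V : Type*} [Field 𝕜] [IsAlgClosed 𝕜] [CharZero 𝕜] [Finite ι] [Nonempty ι]
  [AddCommGroup P] [Module 𝕜 P] [CommRing B] [Algebra 𝕜 B] [AddCommGroup V] [Module 𝕜 V]
  {φ : (ι → ℤ) →+ Dual 𝕜 P} {M : GenWittRep φ B V}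

lemma ker_le_ann {N : ℕ} (hw : M.IsBoundedWeightModule N) (hirr : M.IsIrreducible) {u : P}
    (hu : Function.Injective (φ · u)) {η : B →ₐ[𝕜] 𝕜} (hη : M.killed η = ⊥) :
    RingHom.ker η ≤ M.ann := fun _ ha =>
  isRadical_ann hw hirr hu ⟨N * N, mem_ann_of_forall_X_eq_zero hu fun _ hr p =>
    hw.eq_zero_of_forall_weightSpace fun l =>
      (mem_annOn_weightSpace (apply_ne_zero_of_injective hu hr)).mp
        (hw.pow_mem_annOn_weightSpace hirr hu hη ha hr p l)⟩

theorem exists_forall_X_eq_smul {N : ℕ} (hw : M.IsBoundedWeightModule N) (hirr : M.IsIrreducible)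
    {u : P} (hu : Function.Injective (φ · u)) (hnt : ∃ r p b, M.X r p b ≠ 0) :
    ∃ η : B →ₐ[𝕜] 𝕜, ∀ r p b, M.X r p b = η b • M.X r p 1 := by
  obtain ⟨η, hη⟩ := hw.exists_killed_ne_top hu hnt
  have hbot := (hirr.eq_bot_or_eq_top _ (isInvariant_killed η)).resolve_right hη
  refine ⟨η, fun r p b => ?_⟩
  have hX := mem_ann.mp (ker_le_ann hw hirr hu hbot (sub_algebraMap_mem_ker η b)) r p 1
  rwa [one_mul, map_sub, sub_eq_zero, Algebra.algebraMap_eq_smul_one, map_smul] at hX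

end Evaluation

end GenWittRep

lemma exists_injective_pairC (n : ℕ) : ∃ u : Fin n → ℂ, Function.Injective (pairC u) := by
  obtain ⟨u, hu⟩ := exists_linearIndependent_of_le_rank (R := ℚ) (M := ℂ) (n := n) <| by
    rw [Complex.rank_rat_complex]
    exact (Cardinal.nat_lt_continuum n).le
  have hpair : Fintype.linearCombination ℤ u = pairC u := by
    ext m
    simp only [Fintype.linearCombination_apply, zsmul_eq_mul, pairC, mul_comm]
  exact ⟨u, hpair ▸ (hu.restrict_scalars' ℤ).fintypeLinearCombination_injective⟩

lemma rank_quotient_ker_le_one {𝕜 S : Type*} [Field 𝕜] [AddCommGroup S] [Module 𝕜 S]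
    (c : Module.Dual 𝕜 S) : Module.rank 𝕜 (S ⧸ LinearMap.ker c) ≤ 1 := by
  rw [← Cardinal.lift_le_one_iff, c.quotKerEquivRange.lift_rank_eq, Cardinal.lift_le_one_iff,
    ← CommSemiring.rank_self 𝕜]
  exact Submodule.rank_le _

namespace LoopWitt.ExtWittRep

variable {n : ℕ} {S B V : Type*} [AddCommGroup S] [Module ℂ S] [CommRing B] [Algebra ℂ B]
  [AddCommGroup V] [Module ℂ V]

/-- The weight `lam` on `H` and `c` on `S`, as one functional on `ℂⁿ × S`. -/
def weight (lam : Fin n → ℂ) (c : S →ₗ[ℂ] ℂ) : Module.Dual ℂ ((Fin n → ℂ) × S) :=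
  (dotProductEquiv ℂ (Fin n) lam).coprod c

lemma weight_apply (lam : Fin n → ℂ) (c : S →ₗ[ℂ] ℂ) (p : (Fin n → ℂ) × S) :
    weight lam c p = pairCC p.1 lam + c p.2 := by
  rw [weight, LinearMap.coprod_apply, dotProductEquiv_apply_apply, dotProduct_comm]
  rfl

lemma exists_weight_eq (l : Module.Dual ℂ ((Fin n → ℂ) × S)) : ∃ lam c, weight lam c = l :=
  ⟨(dotProductEquiv ℂ (Fin n)).symm (l ∘ₗ LinearMap.inl ℂ _ _), l ∘ₗ LinearMap.inr ℂ _ _, by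
    rw [weight, LinearEquiv.apply_symm_apply, LinearMap.coprod_comp_inl_inr]⟩

variable (n S) in
/-- The pairing of `ℤⁿ` with `ℂⁿ × S`, zero on `S`. -/
def extPairing : (Fin n → ℤ) →+ Module.Dual ℂ ((Fin n → ℂ) × S) :=
  AddMonoidHom.mk' (fun r => weight (fun i => (r i : ℂ)) 0) fun r s => by
    ext <;> simp [weight_apply, pairCC, mul_add, Finset.sum_add_distrib]

lemma extPairing_apply (r : Fin n → ℤ) (p : (Fin n → ℂ) × S) :
    extPairing n S r p = pairC p.1 r :=
  (weight_apply _ _ p).trans (add_zero _)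

variable (ρ : ExtWittRep n S B V)

/-- The operators `D u r b + E s r b`, linear in `(u, s)` and in `b`. -/
def opX (r : Fin n → ℤ) : (Fin n → ℂ) × S →ₗ[ℂ] B →ₗ[ℂ] Module.End ℂ V :=
  LinearMap.mk₂ ℂ (fun p b => ρ.D p.1 r b + ρ.E p.2 r b)
    (fun p q b => by
      rw [Prod.fst_add, Prod.snd_add, ρ.D_add_u, ρ.E_add_s, add_add_add_comm])
    (fun c p b => by rw [Prod.smul_fst, Prod.smul_snd, ρ.D_smul_u, ρ.E_smul_s, smul_add])
    (fun p b b' => by rw [ρ.D_add_b, ρ.E_add_b, add_add_add_comm])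
    (fun c p b => by rw [ρ.D_smul_b, ρ.E_smul_b, smul_add])

lemma opX_apply (r : Fin n → ℤ) (p : (Fin n → ℂ) × S) (b : B) :
    ρ.opX r p b = ρ.D p.1 r b + ρ.E p.2 r b := rfl

lemma opX_fst (r : Fin n → ℤ) (u : Fin n → ℂ) (b : B) : ρ.opX r (u, 0) b = ρ.D u r b := by
  rw [opX_apply, add_eq_left]
  simpa using ρ.E_smul_s 0 0 r b

lemma opX_snd (r : Fin n → ℤ) (s : S) (b : B) : ρ.opX r (0, s) b = ρ.E s r b := by
  rw [opX_apply, add_eq_right]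
  simpa using ρ.D_smul_u 0 0 r b

lemma lie_opX (r : Fin n → ℤ) (p : (Fin n → ℂ) × S) (b : B) (s : Fin n → ℤ)
    (q : (Fin n → ℂ) × S) (b' : B) :
    ⁅ρ.opX r p b, ρ.opX s q b'⁆ =
      ρ.opX (r + s) (extPairing n S s p • q - extPairing n S r q • p) (b * b') := by
  have hED : ⁅ρ.E p.2 r b, ρ.D q.1 s b'⁆ = -(pairC q.1 r • ρ.E p.2 (r + s) (b * b')) := by
    rw [mul_comm b, ← ρ.comm_DE, Ring.lie_def, Ring.lie_def, neg_sub]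
  have hE : ρ.E (pairC p.1 s • q.2 - pairC q.1 r • p.2) (r + s) (b * b') =
      pairC p.1 s • ρ.E q.2 (r + s) (b * b') - pairC q.1 r • ρ.E p.2 (r + s) (b * b') := by
    rw [sub_eq_add_neg, ← neg_smul, ρ.E_add_s, ρ.E_smul_s, ρ.E_smul_s, neg_smul, ← sub_eq_add_neg]
  calc ⁅ρ.D p.1 r b + ρ.E p.2 r b, ρ.D q.1 s b' + ρ.E q.2 s b'⁆
    _ = ⁅ρ.D p.1 r b, ρ.D q.1 s b'⁆ + ⁅ρ.D p.1 r b, ρ.E q.2 s b'⁆ +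
          (⁅ρ.E p.2 r b, ρ.D q.1 s b'⁆ + ⁅ρ.E p.2 r b, ρ.E q.2 s b'⁆) := by
      simp only [Ring.lie_def]
      noncomm_ring
    _ = ρ.D (pairC p.1 s • q.1 - pairC q.1 r • p.1) (r + s) (b * b') +
          ρ.E (pairC p.1 s • q.2 - pairC q.1 r • p.2) (r + s) (b * b') := by
      rw [ρ.comm_DD, ρ.comm_DE, ρ.comm_EE, hED, hE, add_zero, add_assoc, ← sub_eq_add_neg,
        add_comm s r]
    _ = _ := by
      simp only [opX_apply, extPairing_apply, Prod.fst_sub, Prod.snd_sub, Prod.smul_fst,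
        Prod.smul_snd]

/-- A representation of `(Wₙ ⋉ (S ⊗ Aₙ)) ⊗ B` as one of a generalised Witt algebra, whose vectors
`p` range over `ℂⁿ × S`. -/
def toGenWittRep : GenWittRep (extPairing n S) B V where
  X := ρ.opX
  lie_X := ρ.lie_opX

lemma toGenWittRep_X_fst (r : Fin n → ℤ) (u : Fin n → ℂ) (b : B) :
    ρ.toGenWittRep.X r (u, 0) b = ρ.D u r b := ρ.opX_fst r u b

lemma toGenWittRep_X_snd (r : Fin n → ℤ) (s : S) (b : B) :
    ρ.toGenWittRep.X r (0, s) b = ρ.E s r b := ρ.opX_snd r s b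

lemma weightSpace_weight (lam : Fin n → ℂ) (c : S →ₗ[ℂ] ℂ) :
    ρ.toGenWittRep.weightSpace (weight lam c) = ρ.weightSpace lam c := by
  ext x
  rw [GenWittRep.mem_weightSpace]
  refine ⟨fun h => ⟨fun u => ?_, fun s => ?_⟩, fun h p => ?_⟩
  · rw [← toGenWittRep_X_fst, h, weight_apply, map_zero, add_zero]
  · rw [← toGenWittRep_X_snd, h, weight_apply]
    simp [pairCC]
  · rw [weight_apply, add_smul, ← h.1, ← h.2]
    rfl

variable {ρ}

lemma isIrreducible_toGenWittRep (hirr : ρ.IsIrreducible) : ρ.toGenWittRep.IsIrreducible where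
  nontrivial := nontrivial_of_ne _ _ hirr.1.choose_spec
  eq_bot_or_eq_top U hU := hirr.2 U
    ⟨fun u r b x hx => toGenWittRep_X_fst ρ r u b ▸ hU r (u, 0) b x hx,
      fun s m b x hx => toGenWittRep_X_snd ρ m s b ▸ hU m (0, s) b x hx⟩

lemma isBoundedWeightModule_toGenWittRep (hw : ρ.IsWeightModule) {N : ℕ}
    (hN : ∀ lam c, Module.rank ℂ (ρ.weightSpace lam c) ≤ N) :
    ρ.toGenWittRep.IsBoundedWeightModule N where
  iSup_weightSpace := by
    rw [eq_top_iff, ← show _ = ⊤ from hw]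
    exact iSup_le fun p => ρ.weightSpace_weight p.1 p.2 ▸ le_iSup _ (weight p.1 p.2)
  rank_le l := by
    obtain ⟨lam, c, rfl⟩ := exists_weight_eq l
    rw [weightSpace_weight]
    exact hN lam c

lemma exists_toGenWittRep_X_ne_zero (hnt : ρ.IsNontrivial) :
    ∃ r p b, ρ.toGenWittRep.X r p b ≠ 0 := by
  obtain ⟨u, r, b, x, hx⟩ | ⟨s, m, b, x, hx⟩ := hnt
  · exact ⟨r, (u, 0), b, fun h => hx (by rw [← toGenWittRep_X_fst, h, LinearMap.zero_apply])⟩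
  · exact ⟨m, (0, s), b, fun h => hx (by rw [← toGenWittRep_X_snd, h, LinearMap.zero_apply])⟩

lemma exists_injective_extPairing (n : ℕ) (S : Type*) [AddCommGroup S] [Module ℂ S] :
    ∃ p, Function.Injective (extPairing n S · p) := by
  obtain ⟨u, hu⟩ := exists_injective_pairC n
  exact ⟨(u, 0), by simpa only [extPairing_apply] using hu⟩

section Bounded

variable [NeZero n] (hw : ρ.IsWeightModule) (hub : ρ.UniformlyBounded) (hirr : ρ.IsIrreducible)
include hw hub hirr

theorem isSinglePointEval (hnt : ρ.IsNontrivial) : ρ.IsSinglePointEval := by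
  obtain ⟨N, hN⟩ := hub
  obtain ⟨p, hp⟩ := exists_injective_extPairing n S
  obtain ⟨η, hη⟩ := GenWittRep.exists_forall_X_eq_smul (isBoundedWeightModule_toGenWittRep hw hN)
    (isIrreducible_toGenWittRep hirr) hp (exists_toGenWittRep_X_ne_zero hnt)
  exact ⟨η, fun u r b => by simpa only [toGenWittRep_X_fst] using hη r (u, 0) b,
    fun s m b => by simpa only [toGenWittRep_X_snd] using hη m (0, s) b⟩

theorem exists_dual_forall_mem_ker_E_eq_zero :
    ∃ c : Module.Dual ℂ S, ∀ s ∈ LinearMap.ker c, ∀ m b, ρ.E s m b = 0 := by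
  obtain ⟨N, hN⟩ := hub
  obtain ⟨p, hp⟩ := exists_injective_extPairing n S
  have hbdd := isBoundedWeightModule_toGenWittRep hw hN
  have hirr' := isIrreducible_toGenWittRep hirr
  have := hirr'.nontrivial
  obtain ⟨l, hl⟩ := hbdd.exists_weightSpace_ne_bot
  refine ⟨l ∘ₗ LinearMap.inr ℂ _ S, fun s hs m b => ?_⟩
  have hcentral (r : Fin n → ℤ) : extPairing n S r (0, s) = 0 := by
    simp [extPairing_apply, pairC]
  have hE0 : ρ.toGenWittRep.X 0 (0, s) 1 = 0 := by
    rw [GenWittRep.X_zero_eq_algebraMap hirr' hcentral hl, show l (0, s) = 0 from hs, map_zero]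
  rw [← toGenWittRep_X_snd, GenWittRep.X_eq_zero_of_central hbdd hirr' hp hcentral hE0]

end Bounded

lemma IsIrreducible.eq_bot_or_eq_top_of_subset (hirr : ρ.IsIrreducible) {T : Set S}
    (hT : Submodule.span ℂ T = ⊤) {U : Submodule ℂ V} (hD : ∀ u r b, ∀ x ∈ U, ρ.D u r b x ∈ U)
    (hE : ∀ s ∈ T, ∀ m b, ∀ x ∈ U, ρ.E s m b x ∈ U) : U = ⊥ ∨ U = ⊤ := by
  refine hirr.2 U ⟨hD, fun s m b x hx => ?_⟩
  let stab : Submodule ℂ S :=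
    U.comap (LinearMap.applyₗ x ∘ₗ (ρ.opX m).flip b ∘ₗ LinearMap.inr ℂ _ S)
  have mem_stab (s : S) : s ∈ stab ↔ ρ.E s m b x ∈ U := by
    rw [← opX_snd]
    rfl
  exact (mem_stab s).mp (Submodule.span_le.mpr (fun t ht => (mem_stab t).mpr (hE t ht m b x hx))
    (hT ▸ Submodule.mem_top))

end LoopWitt.ExtWittRep

theorem stmt6_general {n : ℕ} (hn : 1 ≤ n) {S B V : Type*}
    [AddCommGroup S] [Module ℂ S] [CommRing B] [Algebra ℂ B] [AddCommGroup V] [Module ℂ V]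
    (ρ : ExtWittRep n S B V)
    (hnt : ρ.IsNontrivial) (hw : ρ.IsWeightModule) (hub : ρ.UniformlyBounded)
    (hirr : ρ.IsIrreducible) :
    ∃ S0 : Submodule ℂ S,
      (∀ s ∈ S0, ∀ (m : Fin n → ℤ) (b : B), ρ.E s m b = 0) ∧
      Module.rank ℂ (S ⧸ S0) ≤ 1 ∧
      ((S0 = ⊤ →
        (∃ x : V, x ≠ 0) ∧
        ∀ U : Submodule ℂ V,
          (∀ u r b, ∀ x ∈ U, ρ.D u r b x ∈ U) → U = ⊥ ∨ U = ⊤) ∧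
       (∀ s₀ : S, s₀ ∉ S0 →
        (∃ x : V, x ≠ 0) ∧
        ∀ U : Submodule ℂ V,
          ((∀ u r b, ∀ x ∈ U, ρ.D u r b x ∈ U) ∧
            (∀ (m : Fin n → ℤ) (b : B), ∀ x ∈ U, ρ.E s₀ m b x ∈ U)) →
          U = ⊥ ∨ U = ⊤)) ∧
      ρ.IsSinglePointEval := by
  have : NeZero n := ⟨by lia⟩
  obtain ⟨c, hc⟩ := ExtWittRep.exists_dual_forall_mem_ker_E_eq_zero hw hub hirr
  have hker (U : Submodule ℂ V) : ∀ s ∈ LinearMap.ker c, ∀ m b, ∀ x ∈ U, ρ.E s m b x ∈ U :=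
    fun s hs m b x _ => by rw [hc s hs, LinearMap.zero_apply]; exact U.zero_mem
  refine ⟨LinearMap.ker c, hc, rank_quotient_ker_le_one c,
    ⟨fun htop => ⟨hirr.1, fun U hD => ?_⟩, fun s₀ hs₀ => ⟨hirr.1, fun U hU => ?_⟩⟩,
    ExtWittRep.isSinglePointEval hw hub hirr hnt⟩
  · exact hirr.eq_bot_or_eq_top_of_subset (by rw [Submodule.span_eq, htop]) hD (hker U)
  · refine hirr.eq_bot_or_eq_top_of_subset (T := {s₀} ∪ LinearMap.ker c) ?_ hU.1 ?_
    · rw [Submodule.span_union, Submodule.span_eq, c.span_singleton_sup_ker_eq_top hs₀]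
    · rintro s (rfl | hs)
      exacts [hU.2, hker U s hs]

/-- For `n ≥ 1`, any non-trivial irreducible uniformly bounded weight
`𝔏_{S,n}(B)`-module reduces to an irreducible module for `𝔏(B)` or `Wₙ ⊗ B` (a subspace
of `S` of codimension at most one acts trivially), and as such it is a single point
evaluation module. -/
theorem stmt6 {n : ℕ} (hn : 1 ≤ n) {S B V : Type*}
    [AddCommGroup S] [Module ℂ S] [FiniteDimensional ℂ S]
    [CommRing B] [Algebra ℂ B] [Algebra.FiniteType ℂ B]
    [AddCommGroup V] [Module ℂ V]
    (ρ : ExtWittRep n S B V)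
    (hnt : ρ.IsNontrivial) (hw : ρ.IsWeightModule) (hub : ρ.UniformlyBounded)
    (hirr : ρ.IsIrreducible) :
    ∃ S0 : Submodule ℂ S,
      (∀ s ∈ S0, ∀ (m : Fin n → ℤ) (b : B), ρ.E s m b = 0) ∧
      Module.finrank ℂ (S ⧸ S0) ≤ 1 ∧
      -- as a module for `𝔏(B)` (if `S0` is proper) or `Wₙ ⊗ B` (if `S0 = S`), `V` is
      -- irreducible … :
      ((S0 = ⊤ →
        (∃ x : V, x ≠ 0) ∧
        ∀ U : Submodule ℂ V,
          (∀ u r b, ∀ x ∈ U, ρ.D u r b x ∈ U) → U = ⊥ ∨ U = ⊤) ∧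
       (∀ s₀ : S, s₀ ∉ S0 →
        (∃ x : V, x ≠ 0) ∧
        ∀ U : Submodule ℂ V,
          ((∀ u r b, ∀ x ∈ U, ρ.D u r b x ∈ U) ∧
            (∀ (m : Fin n → ℤ) (b : B), ∀ x ∈ U, ρ.E s₀ m b x ∈ U)) →
          U = ⊥ ∨ U = ⊤)) ∧
      -- … and a single point evaluation module:
      ρ.IsSinglePointEval := by
  obtain ⟨S0, hS0, hrank, h⟩ := stmt6_general hn ρ hnt hw hub hirr
  exact ⟨S0, hS0, Module.finrank_le_of_rank_le (mod_cast hrank), h⟩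
end
end
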